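/- arXiv:2103.16666 — 5 statements merged into one kernel-verified Lean document; each statement's English description precedes it below -/
import Mathlib

section
/- Let μ > −5/2, −μ−2 < ν ≤ μ+3 and 0 < β < 1. Then for all x > 0, ∫_0^x e^{−βu} u^ν t̃_{μ,ν}(u) du > e^{−βx} x^ν ∑_{k=0}^∞ β^k · t̃_{μ+k+1,ν+k+1}(x). -/
/-!
Write `a = (μ - ν + 3) / 2 ≥ 0`, `b = (μ + ν + 3) / 2 > 1 / 2` and `q k = μ + ν + 2 k + 1 > -1`.
For `u > 0` the function `u ^ ν * lommel (μ + n) (ν + n) u` is the sum over `k` of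
`C n k * u ^ (q k + n)` with nonnegative coefficients `C n k` (`lomCoeff`), and the functional
equation of `Γ` gives `C n k = (q k + 2 n + 2) * C (n + 1) k`.

With `I p = ∫₀ˣ e ^ (-β u) u ^ p du` (`expInt`), integration by parts reads
`(p + 1) * I p = e ^ (-β x) x ^ (p + 1) + β * I (p + 1)` (`expInt_parts`). Since
`q k + n + 1 ≤ q k + 2 n + 2`, this yields
`e ^ (-β x) C (n + 1) k x ^ (q k + n + 1) + β C (n + 1) k I (q k + n + 1) ≤ C n k I (q k + n)`
(`lomCoeff_step`); for `n = 0` the two sides differ by exactly `C 1 k I (q k)`.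
Iterating in `n` (`lomCoeff_iterate`) and summing over `k` bounds every partial sum of the
right-hand series by the integral minus the fixed positive number `∑ₖ C 1 k I (q k)`, which makes
the final inequality strict. No interchange of the two infinite sums is needed, and the exchange of
`∑ₖ` with the integral is justified by absolute summability (`hasSum_lommel_integral`).
-/

open Real MeasureTheory

/-- Normalised modified Lommel function of the first kind. -/
noncomputable def lommel (μ ν x : ℝ) : ℝ :=
  ∑' k : ℕ, (x / 2) ^ (μ + 2 * (k : ℝ) + 1) /
    (Real.Gamma ((k : ℝ) + (μ - ν + 3) / 2) * Real.Gamma ((k : ℝ) + (μ + ν + 3) / 2))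

/-- The coefficient of `u ^ (μ + ν + 2 k + 1 + n)` in `u ^ ν * lommel (μ + n) (ν + n) u`.
If `ν = μ + 3` and `k = 0` it is `0`, in agreement with `1 / Γ(0) = 0`. -/
noncomputable def lomCoeff (μ ν : ℝ) (n k : ℕ) : ℝ :=
  (1 / 2 : ℝ) ^ (μ + n + 2 * (k : ℝ) + 1) /
    (Real.Gamma ((k : ℝ) + (μ - ν + 3) / 2) * Real.Gamma ((k : ℝ) + n + (μ + ν + 3) / 2))

/-- The incomplete Gamma integral `∫₀ˣ e ^ (-β u) u ^ p du`. -/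
noncomputable def expInt (β x p : ℝ) : ℝ :=
  ∫ u in (0:ℝ)..x, Real.exp (-β * u) * u ^ p

lemma intervalIntegrable_exp_mul_rpow (β x : ℝ) {p : ℝ} (hp : -1 < p) :
    IntervalIntegrable (fun u : ℝ => Real.exp (-β * u) * u ^ p) volume 0 x :=
  (intervalIntegral.intervalIntegrable_rpow' hp).continuousOn_mul
    (Continuous.continuousOn (by fun_prop))

lemma expInt_nonneg (β : ℝ) {x : ℝ} (hx : 0 < x) (p : ℝ) : 0 ≤ expInt β x p := by
  refine intervalIntegral.integral_nonneg hx.le fun u hu => ?_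
  have := Real.rpow_nonneg hu.1 p
  positivity

lemma expInt_pos (β : ℝ) {x p : ℝ} (hx : 0 < x) (hp : -1 < p) : 0 < expInt β x p := by
  refine intervalIntegral.intervalIntegral_pos_of_pos_on
    (intervalIntegrable_exp_mul_rpow β x hp) (fun u hu => ?_) hx
  have := Real.rpow_pos_of_pos hu.1 p
  positivity

lemma expInt_le {β x p : ℝ} (hβ : 0 < β) (hx : 0 < x) (hp : -1 < p) :
    expInt β x p ≤ x ^ (p + 1) / (p + 1) := by
  have h : expInt β x p ≤ ∫ u in (0:ℝ)..x, u ^ p := by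
    refine intervalIntegral.integral_mono_on hx.le (intervalIntegrable_exp_mul_rpow β x hp)
      (intervalIntegral.intervalIntegrable_rpow' hp) fun u hu => ?_
    have h1 : Real.exp (-β * u) ≤ 1 := by
      rw [Real.exp_le_one_iff]
      nlinarith [mul_nonneg hβ.le hu.1]
    nlinarith [Real.rpow_nonneg hu.1 p]
  rw [integral_rpow (Or.inl hp), Real.zero_rpow (by linarith)] at h
  simpa using h

/-- Integration by parts; the boundary term at `0` vanishes because `p + 1 > 0`. -/
lemma expInt_parts (β : ℝ) {x p : ℝ} (hx : 0 < x) (hp : -1 < p) :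
    (p + 1) * expInt β x p = Real.exp (-β * x) * x ^ (p + 1) + β * expInt β x (p + 1) := by
  have i1 := intervalIntegrable_exp_mul_rpow β x hp
  have i2 := intervalIntegrable_exp_mul_rpow β x (p := p + 1) (by linarith)
  have key := intervalIntegral.integral_eq_sub_of_hasDerivAt_of_le
    (f := fun u : ℝ => Real.exp (-β * u) * u ^ (p + 1))
    (f' := fun u : ℝ => (p + 1) * (Real.exp (-β * u) * u ^ p)
      - β * (Real.exp (-β * u) * u ^ (p + 1))) hx.le
    (by
      refine ContinuousOn.mul (by fun_prop) ?_
      exact (Real.continuous_rpow_const (by linarith)).continuousOn)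
    (fun u hu => by
      have h1 : HasDerivAt (fun u : ℝ => Real.exp (-β * u)) (Real.exp (-β * u) * (-β)) u := by
        simpa using ((hasDerivAt_id u).const_mul (-β)).exp
      have h2 := Real.hasDerivAt_rpow_const (x := u) (p := p + 1) (Or.inl hu.1.ne')
      rw [add_sub_cancel_right] at h2
      exact (h1.mul h2).congr_deriv (by ring))
    ((i1.const_mul _).sub (i2.const_mul _))
  rw [intervalIntegral.integral_sub (i1.const_mul _) (i2.const_mul _),
    intervalIntegral.integral_const_mul, intervalIntegral.integral_const_mul,
    Real.zero_rpow (by linarith)] at key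
  unfold expInt
  linarith

section coefficients

variable {μ ν : ℝ}

lemma lomCoeff_nonneg (h1 : -μ - 2 < ν) (h2 : ν ≤ μ + 3) (n k : ℕ) :
    0 ≤ lomCoeff μ ν n k := by
  have hk : (0:ℝ) ≤ k := k.cast_nonneg
  have hn : (0:ℝ) ≤ n := n.cast_nonneg
  refine div_nonneg (by positivity) (mul_nonneg (Real.Gamma_nonneg_of_nonneg (by linarith))
    (Real.Gamma_nonneg_of_nonneg (by linarith)))

lemma lomCoeff_pos (h1 : -μ - 2 < ν) (h2 : ν ≤ μ + 3) (n : ℕ) {k : ℕ} (hk1 : 1 ≤ k) :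
    0 < lomCoeff μ ν n k := by
  have hk : (1:ℝ) ≤ k := by exact_mod_cast hk1
  have hn : (0:ℝ) ≤ n := n.cast_nonneg
  refine div_pos (by positivity) (mul_pos (Real.Gamma_pos_of_pos (by linarith))
    (Real.Gamma_pos_of_pos (by linarith)))

/-- Functional equation of `Γ` in the second factor, moving `n` to `n + 1`. -/
lemma lomCoeff_eq (h1 : -μ - 2 < ν) (n k : ℕ) :
    lomCoeff μ ν n k = (μ + ν + 2 * (k : ℝ) + 1 + 2 * n + 2) * lomCoeff μ ν (n + 1) k := by
  have hk : (0:ℝ) ≤ k := k.cast_nonneg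
  have hn : (0:ℝ) ≤ n := n.cast_nonneg
  have hs : 0 < (k : ℝ) + n + (μ + ν + 3) / 2 := by linarith
  unfold lomCoeff
  have e1 : (k : ℝ) + ((n + 1 : ℕ) : ℝ) + (μ + ν + 3) / 2
      = ((k : ℝ) + n + (μ + ν + 3) / 2) + 1 := by push_cast; ring
  have e2 : μ + ((n + 1 : ℕ) : ℝ) + 2 * (k : ℝ) + 1 = (μ + n + 2 * (k : ℝ) + 1) + 1 := by
    push_cast; ring
  rw [e1, e2, Real.Gamma_add_one hs.ne',
    Real.rpow_add_one (by norm_num) (μ + n + 2 * (k : ℝ) + 1)]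
  have e3 : μ + ν + 2 * (k : ℝ) + 1 + 2 * n + 2 = 2 * ((k : ℝ) + n + (μ + ν + 3) / 2) := by ring
  rw [e3]
  have hg := (Real.Gamma_pos_of_pos hs).ne'
  -- `Γ(k + (μ - ν + 3) / 2)` may be the junk value `0`, so it is kept as an inverse factor
  rw [mul_comm (Real.Gamma ((k : ℝ) + (μ - ν + 3) / 2)),
    mul_comm (Real.Gamma ((k : ℝ) + (μ - ν + 3) / 2)), ← div_div, ← div_div, ← mul_div_assoc]
  congr 1
  generalize (1 / 2 : ℝ) ^ (μ + n + 2 * (k : ℝ) + 1) = w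
  generalize (k : ℝ) + n + (μ + ν + 3) / 2 = B at *
  field_simp

/-- Ratio test: consecutive terms have quotient `(x / 2) ^ 2 / ((k + a) (k + n + b))`. -/
lemma summable_lomCoeff (h1 : -μ - 2 < ν) (h2 : ν ≤ μ + 3) (n : ℕ) {x : ℝ} (hx : 0 < x) :
    Summable fun k : ℕ => lomCoeff μ ν n k * x ^ (μ + ν + 2 * (k : ℝ) + 1 + n) := by
  refine summable_of_ratio_norm_eventually_le (r := 1 / 2) (by norm_num) ?_
  filter_upwards [Filter.eventually_ge_atTop 1, Filter.eventually_ge_atTop ⌈x ^ 2⌉₊] with k hk1 hk2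
  have hk : (1:ℝ) ≤ k := by exact_mod_cast hk1
  have hkx : x ^ 2 ≤ k := Nat.ceil_le.mp hk2
  have hn : (0:ℝ) ≤ n := n.cast_nonneg
  have hA : 0 < (k : ℝ) + (μ - ν + 3) / 2 := by linarith
  have hB : 0 < (k : ℝ) + n + (μ + ν + 3) / 2 := by linarith
  have e : lomCoeff μ ν n (k + 1) * x ^ (μ + ν + 2 * ((k + 1 : ℕ) : ℝ) + 1 + n)
      = ((x ^ 2 / 4) / (((k : ℝ) + (μ - ν + 3) / 2) * ((k : ℝ) + n + (μ + ν + 3) / 2)))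
        * (lomCoeff μ ν n k * x ^ (μ + ν + 2 * (k : ℝ) + 1 + n)) := by
    unfold lomCoeff
    have e1 : ((k + 1 : ℕ) : ℝ) + (μ - ν + 3) / 2 = ((k : ℝ) + (μ - ν + 3) / 2) + 1 := by
      push_cast; ring
    have e2 : ((k + 1 : ℕ) : ℝ) + n + (μ + ν + 3) / 2
        = ((k : ℝ) + n + (μ + ν + 3) / 2) + 1 := by push_cast; ring
    have e3 : μ + n + 2 * ((k + 1 : ℕ) : ℝ) + 1 = (μ + n + 2 * (k : ℝ) + 1) + (2 : ℕ) := by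
      push_cast; ring
    have e4 : μ + ν + 2 * ((k + 1 : ℕ) : ℝ) + 1 + n
        = (μ + ν + 2 * (k : ℝ) + 1 + n) + (2 : ℕ) := by push_cast; ring
    rw [e1, e2, e3, e4, Real.Gamma_add_one hA.ne', Real.Gamma_add_one hB.ne',
      Real.rpow_add_natCast (by norm_num), Real.rpow_add_natCast hx.ne']
    generalize (k : ℝ) + (μ - ν + 3) / 2 = A at *
    generalize (k : ℝ) + n + (μ + ν + 3) / 2 = B at *
    have hgA := (Real.Gamma_pos_of_pos hA).ne'
    have hgB := (Real.Gamma_pos_of_pos hB).ne'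
    field_simp
    norm_num
  have hnn : 0 ≤ lomCoeff μ ν n k * x ^ (μ + ν + 2 * (k : ℝ) + 1 + n) :=
    mul_nonneg (lomCoeff_nonneg h1 h2 n k) (by positivity)
  rw [e, norm_mul, Real.norm_of_nonneg (by positivity : 0 ≤ (x ^ 2 / 4) / _)]
  refine mul_le_mul_of_nonneg_right ?_ (norm_nonneg _)
  rw [div_le_iff₀ (by positivity)]
  have hA' : (k : ℝ) ≤ (k : ℝ) + (μ - ν + 3) / 2 := by linarith
  have hB' : 1 ≤ (k : ℝ) + n + (μ + ν + 3) / 2 := by linarith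
  nlinarith [mul_le_mul hA' hB' zero_le_one hA.le]

lemma rpow_mul_lommel (μ ν : ℝ) (n : ℕ) {u : ℝ} (hu : 0 < u) :
    u ^ ν * lommel (μ + n) (ν + n) u
      = ∑' k : ℕ, lomCoeff μ ν n k * u ^ (μ + ν + 2 * (k : ℝ) + 1 + n) := by
  unfold lommel lomCoeff
  rw [← tsum_mul_left]
  refine tsum_congr fun k => ?_
  have e1 : μ + ν + 2 * (k : ℝ) + 1 + n = ν + (μ + n + 2 * (k : ℝ) + 1) := by ring
  have e2 : (k : ℝ) + (μ + n - (ν + n) + 3) / 2 = (k : ℝ) + (μ - ν + 3) / 2 := by ring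
  have e3 : (k : ℝ) + (μ + n + (ν + n) + 3) / 2 = (k : ℝ) + n + (μ + ν + 3) / 2 := by ring
  rw [e1, e2, e3, Real.rpow_add hu, div_eq_mul_one_div u 2,
    Real.mul_rpow hu.le (by norm_num)]
  ring

/-- Termwise integration by parts combined with `(q k + n + 1) + 1 ≤ q k + 2 n + 2`, the extra `1`
being the last summand on the left. -/
lemma lomCoeff_step (h1 : -μ - 2 < ν) (h2 : ν ≤ μ + 3) (β : ℝ) {x : ℝ} (hx : 0 < x) (n k : ℕ) :
    Real.exp (-β * x) *
        (lomCoeff μ ν (n + 1) k * x ^ (μ + ν + 2 * (k : ℝ) + 1 + (n + 1 : ℕ)))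
      + β * (lomCoeff μ ν (n + 1) k * expInt β x (μ + ν + 2 * (k : ℝ) + 1 + (n + 1 : ℕ)))
      + lomCoeff μ ν (n + 1) k * expInt β x (μ + ν + 2 * (k : ℝ) + 1 + n)
      ≤ lomCoeff μ ν n k * expInt β x (μ + ν + 2 * (k : ℝ) + 1 + n) := by
  have hk : (0:ℝ) ≤ k := k.cast_nonneg
  have hn : (0:ℝ) ≤ n := n.cast_nonneg
  have hp := expInt_parts β hx (p := μ + ν + 2 * (k : ℝ) + 1 + n) (by linarith)
  have hc := lomCoeff_nonneg h1 h2 (n + 1) k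
  have hI := expInt_nonneg β hx (μ + ν + 2 * (k : ℝ) + 1 + n)
  rw [lomCoeff_eq h1 n k]
  have e : μ + ν + 2 * (k : ℝ) + 1 + (n + 1 : ℕ) = μ + ν + 2 * (k : ℝ) + 1 + n + 1 := by
    push_cast; ring
  rw [e]
  have h3 := mul_nonneg hn (mul_nonneg hc hI)
  linear_combination h3 - lomCoeff μ ν (n + 1) k * hp

/-- Iteration of `lomCoeff_step`; the surplus `C 1 k * I (q k)` of the step `n = 0` is kept. -/
lemma lomCoeff_iterate (h1 : -μ - 2 < ν) (h2 : ν ≤ μ + 3) {β x : ℝ} (hβ : 0 < β) (hx : 0 < x)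
    (k N : ℕ) :
    (∑ n ∈ Finset.range (N + 1), Real.exp (-β * x) * (β ^ n *
        (lomCoeff μ ν (n + 1) k * x ^ (μ + ν + 2 * (k : ℝ) + 1 + (n + 1 : ℕ)))))
      + β ^ (N + 1) * (lomCoeff μ ν (N + 1) k *
        expInt β x (μ + ν + 2 * (k : ℝ) + 1 + (N + 1 : ℕ)))
      + lomCoeff μ ν 1 k * expInt β x (μ + ν + 2 * (k : ℝ) + 1 + (0 : ℕ))
      ≤ lomCoeff μ ν 0 k * expInt β x (μ + ν + 2 * (k : ℝ) + 1 + (0 : ℕ)) := by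
  induction N with
  | zero => simpa using lomCoeff_step h1 h2 β hx 0 k
  | succ N ih =>
    rw [Finset.sum_range_succ]
    have hs := lomCoeff_step h1 h2 β hx (N + 1) k
    have h0 := mul_nonneg (lomCoeff_nonneg h1 h2 (N + 1 + 1) k)
      (expInt_nonneg β hx (μ + ν + 2 * (k : ℝ) + 1 + (N + 1 : ℕ)))
    have hm := mul_le_mul_of_nonneg_left ((le_add_of_nonneg_right h0).trans hs)
      (pow_nonneg hβ.le (N + 1))
    rw [mul_add] at hm
    refine le_trans (le_of_eq ?_) ((add_le_add_left (add_le_add_right hm _) _).trans ih)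
    ring

/-- Termwise integration of the series of `u ^ ν * lommel μ ν u`. -/
lemma hasSum_lommel_integral (h1 : -μ - 2 < ν) (h2 : ν ≤ μ + 3) {β x : ℝ} (hβ : 0 < β)
    (hx : 0 < x) :
    HasSum (fun k : ℕ => lomCoeff μ ν 0 k * expInt β x (μ + ν + 2 * (k : ℝ) + 1 + (0 : ℕ)))
      (∫ u in (0:ℝ)..x, Real.exp (-β * u) * u ^ ν * lommel μ ν u) := by
  set F : ℕ → ℝ → ℝ := fun k u =>
    lomCoeff μ ν 0 k * (Real.exp (-β * u) * u ^ (μ + ν + 2 * (k : ℝ) + 1 + (0 : ℕ))) with hF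
  have hq : ∀ k : ℕ, -1 < μ + ν + 2 * (k : ℝ) + 1 + (0 : ℕ) := fun k => by
    have hk : (0:ℝ) ≤ k := k.cast_nonneg
    push_cast; linarith
  have hint : ∀ k, Integrable (F k) (volume.restrict (Set.Ioc 0 x)) := fun k =>
    ((intervalIntegrable_iff_integrableOn_Ioc_of_le hx.le).mp
      (intervalIntegrable_exp_mul_rpow β x (hq k))).const_mul _
  have hI : ∀ k, ∫ u in Set.Ioc 0 x, F k u
      = lomCoeff μ ν 0 k * expInt β x (μ + ν + 2 * (k : ℝ) + 1 + (0 : ℕ)) := fun k => by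
    rw [integral_const_mul, expInt, intervalIntegral.integral_of_le hx.le]
  have hN : ∀ k, ∫ u in Set.Ioc 0 x, ‖F k u‖
      = lomCoeff μ ν 0 k * expInt β x (μ + ν + 2 * (k : ℝ) + 1 + (0 : ℕ)) := fun k => by
    rw [← hI k]
    refine setIntegral_congr_fun measurableSet_Ioc fun u hu => ?_
    have hu0 : 0 < u := hu.1
    exact Real.norm_of_nonneg (mul_nonneg (lomCoeff_nonneg h1 h2 0 k) (by positivity))
  have hsum : Summable fun k : ℕ =>
      lomCoeff μ ν 0 k * expInt β x (μ + ν + 2 * (k : ℝ) + 1 + (0 : ℕ)) := by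
    refine Summable.of_nonneg_of_le
      (fun k => mul_nonneg (lomCoeff_nonneg h1 h2 0 k) (expInt_nonneg β hx _)) (fun k => ?_)
      ((summable_lomCoeff h1 h2 0 hx).mul_right (x / (μ + ν + 2)))
    rw [mul_assoc]
    refine mul_le_mul_of_nonneg_left ((expInt_le hβ hx (hq k)).trans ?_)
      (lomCoeff_nonneg h1 h2 0 k)
    have hk : (0:ℝ) ≤ k := k.cast_nonneg
    rw [Real.rpow_add_one hx.ne', mul_div_assoc]
    refine mul_le_mul_of_nonneg_left ?_ (by positivity)
    refine div_le_div_of_nonneg_left hx.le (by linarith) ?_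
    push_cast; linarith
  have key := hasSum_integral_of_summable_integral_norm hint (by simpa only [hN] using hsum)
  simp only [hI] at key
  rw [intervalIntegral.integral_of_le hx.le]
  suffices h : ∫ u in Set.Ioc 0 x, Real.exp (-β * u) * u ^ ν * lommel μ ν u
      = ∫ u in Set.Ioc 0 x, ∑' k, F k u by rwa [h]
  refine setIntegral_congr_fun measurableSet_Ioc fun u hu => ?_
  have h := rpow_mul_lommel μ ν 0 hu.1
  simp only [Nat.cast_zero, add_zero] at h
  simp only [hF, mul_assoc, h, ← tsum_mul_left, Nat.cast_zero, add_zero]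
  exact tsum_congr fun k => by ring

end coefficients

theorem stmt7 (μ ν β : ℝ) (hμ : μ > -5/2) (hν1 : -μ - 2 < ν) (hν2 : ν ≤ μ + 3)
    (hβ1 : 0 < β) (hβ2 : β < 1) :
    ∀ x : ℝ, 0 < x →
      ∫ u in (0:ℝ)..x, Real.exp (-β * u) * u ^ ν * lommel μ ν u >
        Real.exp (-β * x) * x ^ ν *
          ∑' k : ℕ, β ^ k * lommel (μ + (k : ℝ) + 1) (ν + (k : ℝ) + 1) x := by
  intro x hx
  have hJ := hasSum_lommel_integral hν1 hν2 hβ1 hx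
  set J := ∫ u in (0:ℝ)..x, Real.exp (-β * u) * u ^ ν * lommel μ ν u
  set d : ℕ → ℝ := fun k =>
    lomCoeff μ ν 1 k * expInt β x (μ + ν + 2 * (k : ℝ) + 1 + (0 : ℕ)) with hd
  set f : ℕ → ℝ := fun n => Real.exp (-β * x) * (β ^ n *
    ∑' k : ℕ, lomCoeff μ ν (n + 1) k * x ^ (μ + ν + 2 * (k : ℝ) + 1 + (n + 1 : ℕ))) with hf
  have hd0 : ∀ k, 0 ≤ d k := fun k =>
    mul_nonneg (lomCoeff_nonneg hν1 hν2 1 k) (expInt_nonneg β hx _)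
  have ht0 : ∀ n k : ℕ,
      0 ≤ lomCoeff μ ν n k * x ^ (μ + ν + 2 * (k : ℝ) + 1 + n) := fun n k =>
    mul_nonneg (lomCoeff_nonneg hν1 hν2 n k) (by positivity)
  have hf0 : ∀ n, 0 ≤ f n := fun n =>
    mul_nonneg (Real.exp_pos _).le (mul_nonneg (by positivity) (tsum_nonneg (ht0 (n + 1))))
  have hit : ∀ N k : ℕ,
      (∑ n ∈ Finset.range (N + 1), Real.exp (-β * x) * (β ^ n *
        (lomCoeff μ ν (n + 1) k * x ^ (μ + ν + 2 * (k : ℝ) + 1 + (n + 1 : ℕ))))) + d k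
      ≤ lomCoeff μ ν 0 k * expInt β x (μ + ν + 2 * (k : ℝ) + 1 + (0 : ℕ)) := fun N k => by
    have h0 : 0 ≤ β ^ (N + 1) * (lomCoeff μ ν (N + 1) k *
        expInt β x (μ + ν + 2 * (k : ℝ) + 1 + (N + 1 : ℕ))) :=
      mul_nonneg (by positivity)
        (mul_nonneg (lomCoeff_nonneg hν1 hν2 _ k) (expInt_nonneg β hx _))
    have := lomCoeff_iterate hν1 hν2 hβ1 hx k N
    simp only [hd]
    linarith
  have hds : Summable d := by
    refine Summable.of_nonneg_of_le hd0 (fun k => ?_) hJ.summable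
    refine le_trans (le_add_of_nonneg_left ?_) (hit 0 k)
    exact Finset.sum_nonneg fun n _ => mul_nonneg (Real.exp_pos _).le
      (mul_nonneg (by positivity) (ht0 (n + 1) k))
  -- the term `k = 0` of `d` vanishes when `ν = μ + 3`, so positivity is read off at `k = 1`
  have hδ : 0 < ∑' k, d k := by
    refine hds.tsum_pos hd0 1 (mul_pos (lomCoeff_pos hν1 hν2 1 le_rfl) (expInt_pos β hx ?_))
    push_cast; linarith
  have hpart : ∀ N, ∑ n ∈ Finset.range (N + 1), f n + ∑' k, d k ≤ J := fun N => by
    have hs : HasSum (fun k : ℕ => (∑ n ∈ Finset.range (N + 1), Real.exp (-β * x) * (β ^ n *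
        (lomCoeff μ ν (n + 1) k * x ^ (μ + ν + 2 * (k : ℝ) + 1 + (n + 1 : ℕ))))) + d k)
        (∑ n ∈ Finset.range (N + 1), f n + ∑' k, d k) :=
      (hasSum_sum fun n _ =>
        (((summable_lomCoeff hν1 hν2 (n + 1) hx).hasSum.mul_left _).mul_left _)).add hds.hasSum
    exact hasSum_le (hit N) hs hJ
  have htot : ∑' n, f n ≤ J - ∑' k, d k := by
    refine Real.tsum_le_of_sum_range_le hf0 fun N => ?_
    have h := hpart N
    rw [Finset.sum_range_succ] at h
    linarith [hf0 N]
  have heq : Real.exp (-β * x) * x ^ ν *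
      ∑' k : ℕ, β ^ k * lommel (μ + (k : ℝ) + 1) (ν + (k : ℝ) + 1) x = ∑' n, f n := by
    rw [← tsum_mul_left]
    refine tsum_congr fun n => ?_
    simp only [hf]
    rw [← rpow_mul_lommel μ ν (n + 1) hx]
    push_cast
    rw [← add_assoc, ← add_assoc]
    ring
  rw [heq]
  linarith
end

section
/- Let μ > 1/2, 3/2 ≤ ν < μ+1 and 0 < β < 1. Then for all x > 0, ∫_0^x e^{−βu} u^ν t̃_{μ+1,ν+1}(u) du > (1/(1−β)) · ( (1 − 4ν²/((2ν−1)(1−β)x)) · e^{−βx} x^ν t̃_{μ,ν}(x) − B_{μ,ν,β}(x) ). -/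
/-! With `a = (μ - ν + 3) / 2`, `b = (μ + ν + 3) / 2` one has
`lommel μ ν x = (x / 2) ^ (μ + 1) * E a b (x ^ 2 / 4)`, where
`E a b y = ∑ y ^ k / (Γ (k + a) Γ (k + b))` is entire, symmetric in `a, b`, and satisfies
`y E' a b = E a (b - 1) - (b - 1) E a b` and `E a b = 1 / (Γ a Γ b) + y E (a + 1) (b + 1)`.

The key estimate (`ratio_bound`) is `(x + 1) / 2 * E a b < E a (b - 1)` at `y = x ^ 2 / 4` when
`b - a ≥ 3 / 2`; in Lommel terms, `(1 + 1 / x) t_{μ,ν} < t_{μ-1,ν-1}`. The difference `g` of the two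
sides satisfies `x g' + (2 a - 1 + x) g > 0`, so `x ^ (2 a - 1) e ^ x g` is increasing from `0`.

The theorem then follows by differentiation. After multiplication by `2 ^ μ (1 - β)`, the difference
of the two sides is the function `H` of `H_pos`, which is continuous on `[0, ∞)` and vanishes at `0`.
The recurrence `E a (b - 1) = 1 / (Γ (a - 1) Γ b) + y E a (b + 1) + ν E a b` removes the
inhomogeneous terms from `H'`, and two uses of the key estimate, at `(a, b)` and at `(a, b + 1)`,
show that `H' > 0`. -/

open Real MeasureTheory

/-- Lower incomplete gamma function. -/
noncomputable def lowerGamma (a x : ℝ) : ℝ :=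
  ∫ u in (0:ℝ)..x, Real.exp (-u) * u ^ (a - 1)

noncomputable def Bconst (μ ν β x : ℝ) : ℝ :=
  β ^ (-μ - ν - 1) * lowerGamma (μ + ν + 1) (β * x) /
    (2 ^ μ * Real.Gamma ((μ - ν + 1) / 2) * Real.Gamma ((μ + ν + 3) / 2))

/-! ### The entire series `E` -/

/-- Coefficients of `E`. -/
noncomputable def cf (a b : ℝ) (k : ℕ) : ℝ := 1 / (Real.Gamma (k + a) * Real.Gamma (k + b))

/-- The entire function with `lommel μ ν x = (x / 2) ^ (μ + 1) * E a b (x ^ 2 / 4)`, where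
`a = (μ - ν + 3) / 2` and `b = (μ + ν + 3) / 2`. -/
noncomputable def E (a b y : ℝ) : ℝ := ∑' k : ℕ, cf a b k * y ^ k

lemma cf_pos {a b : ℝ} (ha : 0 < a) (hb : 0 < b) (k : ℕ) : 0 < cf a b k := by
  have h1 : 0 < Real.Gamma (k + a) := Real.Gamma_pos_of_pos (by positivity)
  have h2 : 0 < Real.Gamma (k + b) := Real.Gamma_pos_of_pos (by positivity)
  unfold cf; positivity

lemma cf_succ {a b : ℝ} (ha : 0 < a) (hb : 0 < b) (k : ℕ) :
    cf a b (k + 1) = cf a b k / ((k + a) * (k + b)) := by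
  have e1 : Real.Gamma (((k + 1 : ℕ) : ℝ) + a) = (k + a) * Real.Gamma (k + a) := by
    rw [← Real.Gamma_add_one (by positivity)]; push_cast; ring_nf
  have e2 : Real.Gamma (((k + 1 : ℕ) : ℝ) + b) = (k + b) * Real.Gamma (k + b) := by
    rw [← Real.Gamma_add_one (by positivity)]; push_cast; ring_nf
  have h1 : 0 < Real.Gamma (k + a) := Real.Gamma_pos_of_pos (by positivity)
  have h2 : 0 < Real.Gamma (k + b) := Real.Gamma_pos_of_pos (by positivity)
  unfold cf
  rw [e1, e2]
  field_simp

lemma cf_lower {a b : ℝ} (hb : 1 < b) (k : ℕ) :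
    cf a (b - 1) k = (k + b - 1) * cf a b k := by
  have hp : (0:ℝ) < k + (b - 1) := by have : (0:ℝ) ≤ k := k.cast_nonneg
                                      linarith
  have e : Real.Gamma (k + b) = (k + (b - 1)) * Real.Gamma (k + (b - 1)) := by
    rw [← Real.Gamma_add_one hp.ne']; ring_nf
  have h2 : 0 < Real.Gamma (k + (b - 1)) := Real.Gamma_pos_of_pos hp
  unfold cf
  rw [e]
  have : (k + b - 1 : ℝ) = k + (b - 1) := by ring
  rw [this]
  by_cases h0 : Real.Gamma (k + a) = 0
  · simp [h0]
  · field_simp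

lemma summable_cf {a b : ℝ} (ha : 0 < a) (hb : 0 < b) (y : ℝ) :
    Summable fun k : ℕ => cf a b k * y ^ k := by
  rcases eq_or_ne y 0 with rfl | hy
  · exact summable_of_ne_finset_zero (s := {0}) (by
      intro k hk; simp at hk; simp [hk])
  refine summable_of_ratio_test_tendsto_lt_one (l := 0) one_pos ?_ ?_
  · exact Filter.Eventually.of_forall fun k => mul_ne_zero (cf_pos ha hb k).ne' (pow_ne_zero _ hy)
  · have h1 : Filter.Tendsto (fun k : ℕ => |y| / (((k:ℝ) + a) * (k + b))) Filter.atTop (nhds 0) := by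
      apply Filter.Tendsto.const_div_atTop
      apply Filter.Tendsto.atTop_mul_atTop₀
      · exact Filter.tendsto_atTop_add_const_right _ _ tendsto_natCast_atTop_atTop
      · exact Filter.tendsto_atTop_add_const_right _ _ tendsto_natCast_atTop_atTop
    refine h1.congr fun k => ?_
    have hc := cf_pos ha hb k
    rw [cf_succ ha hb]
    simp only [norm_mul, norm_div, norm_pow, Real.norm_eq_abs]
    rw [abs_of_pos hc, abs_of_pos (show 0 < (k:ℝ) + a by positivity),
      abs_of_pos (show 0 < (k:ℝ) + b by positivity)]
    have : |y| ≠ 0 := by simpa using hy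
    field_simp
    ring

lemma E_pos {a b y : ℝ} (ha : 0 < a) (hb : 0 < b) (hy : 0 ≤ y) : 0 < E a b y := by
  refine (summable_cf ha hb y).tsum_pos (fun k => ?_) 0 ?_
  · exact mul_nonneg (cf_pos ha hb k).le (pow_nonneg hy k)
  · simpa using cf_pos ha hb 0

lemma E_symm (a b y : ℝ) : E a b y = E b a y := by
  simp [E, cf, mul_comm]

lemma summable_ncf {a b : ℝ} (ha : 0 < a) (hb : 1 < b) (y : ℝ) :
    Summable fun k : ℕ => k * cf a b k * y ^ k := by
  have := (summable_cf ha (sub_pos.2 hb) y).sub ((summable_cf ha (one_pos.trans hb) y).mul_left (b - 1))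
  refine this.congr fun k => ?_
  rw [cf_lower hb]; ring

lemma hasDerivAt_E {a b : ℝ} (ha : 0 < a) (hb : 1 < b) (y : ℝ) :
    HasDerivAt (E a b) (∑' k : ℕ, k * cf a b k * y ^ (k - 1)) y := by
  set R := |y| + 1 with hR
  have hRpos : 0 < R := by positivity
  have hu : Summable fun k : ℕ => k * cf a b k * R ^ (k - 1) := by
    refine ((summable_ncf ha hb R).mul_right R⁻¹).congr fun k => ?_
    rcases k with _ | k
    · simp
    · simp only [Nat.add_sub_cancel, pow_succ]; field_simp
  refine hasDerivAt_tsum_of_isPreconnected (t := Metric.ball 0 R) (y₀ := 0)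
    (g := fun k z => cf a b k * z ^ k) (g' := fun k z => k * cf a b k * z ^ (k - 1))
    hu Metric.isOpen_ball (convex_ball 0 R).isPreconnected ?_ ?_ ?_ ?_ ?_
  · intro k z _
    exact ((hasDerivAt_pow k z).const_mul (cf a b k)).congr_deriv (by ring)
  · intro k z hz
    have hz' : |z| ≤ R := by simpa using (Metric.mem_ball.1 hz).le
    have hc := cf_pos ha (one_pos.trans hb) k
    rw [norm_mul, norm_pow, Real.norm_eq_abs, Real.norm_eq_abs, abs_of_nonneg (by positivity)]
    gcongr
  · simpa using hRpos
  · exact summable_cf ha (one_pos.trans hb) 0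
  · simp [hR]

lemma mul_deriv_E {a b : ℝ} (ha : 0 < a) (hb : 1 < b) (y : ℝ) :
    y * (∑' k : ℕ, k * cf a b k * y ^ (k - 1)) = E a (b - 1) y - (b - 1) * E a b y := by
  unfold E
  rw [← tsum_mul_left, ← tsum_mul_left, ← (summable_cf ha (sub_pos.2 hb) y).tsum_sub
    ((summable_cf ha (one_pos.trans hb) y).mul_left (b - 1))]
  refine tsum_congr fun k => ?_
  rw [cf_lower hb]
  rcases k with _ | k
  · simp
  · simp only [Nat.add_sub_cancel, pow_succ]; ring

lemma continuous_E {a b : ℝ} (ha : 0 < a) (hb : 1 < b) : Continuous (E a b) :=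
  continuous_iff_continuousAt.2 fun y => (hasDerivAt_E ha hb y).continuousAt

/-- The chain rule for `y = x ^ 2 / 4`, which turns `y d/dy` into `(x / 2) d/dx`. -/
lemma hasDerivAt_E_sq {a b x : ℝ} (ha : 0 < a) (hb : 1 < b) (hx : 0 < x) :
    HasDerivAt (fun x => E a b (x ^ 2 / 4))
      (2 / x * (E a (b - 1) (x ^ 2 / 4) - (b - 1) * E a b (x ^ 2 / 4))) x := by
  have h := (hasDerivAt_E ha hb (x ^ 2 / 4)).comp x ((hasDerivAt_pow 2 x).div_const 4)
  rw [← mul_deriv_E ha hb]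
  refine h.congr_deriv ?_
  push_cast
  field_simp

lemma E_shift {a b : ℝ} (ha : 0 < a) (hb : 0 < b) (y : ℝ) :
    E a b y = cf a b 0 + y * E (a + 1) (b + 1) y := by
  unfold E
  rw [(summable_cf ha hb y).tsum_eq_zero_add, ← tsum_mul_left]
  congr 1
  · simp
  · refine tsum_congr fun k => ?_
    have : cf a b (k + 1) = cf (a + 1) (b + 1) k := by
      unfold cf; push_cast; ring_nf
    rw [this, pow_succ]; ring

/-- Subtracts the two formulas for `y E' a b`, lowering `b` and lowering `a`. -/
lemma E_sub {a b : ℝ} (ha : 1 < a) (hb : 1 < b) (y : ℝ) :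
    E a (b - 1) y = E (a - 1) b y + (b - a) * E a b y := by
  have h1 := mul_deriv_E (one_pos.trans ha) hb y
  have h2 := mul_deriv_E (one_pos.trans hb) ha y
  have h3 : ∀ k, cf b a k = cf a b k := fun k => by simp [cf, mul_comm]
  simp only [h3] at h2
  rw [E_symm b (a - 1), E_symm b a] at h2
  linarith

/-! ### The key ratio estimate -/

/-- The estimate `(1 + 1 / x) t_{μ,ν} (x) < t_{μ-1,ν-1} (x)` for `ν = b - a ≥ 3 / 2`. -/
lemma ratio_bound {a b x : ℝ} (ha : 1 < a) (hab : 3 / 2 ≤ b - a) (hx : 0 < x) :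
    (x + 1) / 2 * E a b (x ^ 2 / 4) < E a (b - 1) (x ^ 2 / 4) := by
  have ha0 : 0 < a := by linarith
  have hb : 1 < b - 1 := by linarith
  set g : ℝ → ℝ := fun x => E a (b - 1) (x ^ 2 / 4) - (x + 1) / 2 * E a b (x ^ 2 / 4) with hg
  have hsq : Continuous fun x : ℝ => x ^ 2 / 4 := by fun_prop
  have hmono : StrictMonoOn (fun x : ℝ => x ^ (2 * a - 1) * Real.exp x * g x) (Set.Ici 0) := by
    refine strictMonoOn_of_deriv_pos (convex_Ici 0) ?_ ?_
    · have c1 : Continuous fun x : ℝ => x ^ (2 * a - 1) :=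
        Real.continuous_rpow_const (by linarith)
      have c2 : Continuous fun x : ℝ => E a (b - 1) (x ^ 2 / 4) :=
        (continuous_E ha0 hb).comp hsq
      have c3 : Continuous fun x : ℝ => E a b (x ^ 2 / 4) :=
        (continuous_E ha0 (by linarith)).comp hsq
      exact Continuous.continuousOn (by fun_prop)
    · intro x hx
      rw [interior_Ici] at hx
      have hx : 0 < x := hx
      have d1 := hasDerivAt_E_sq (x := x) (a := b - 1) (b := a) (by linarith) ha hx
      simp only [E_symm (b - 1)] at d1
      have d2 := hasDerivAt_E_sq (x := x) (a := a) (b := b) ha0 (by linarith) hx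
      have d3 : HasDerivAt (fun x : ℝ => x ^ (2 * a - 1)) _ x :=
        Real.hasDerivAt_rpow_const (Or.inl hx.ne')
      have d4 := (d3.mul (Real.hasDerivAt_exp x)).mul
        (d1.sub ((((hasDerivAt_id x).add_const 1).div_const 2).mul d2))
      have hs := E_shift (a := a - 1) (b := b - 1) (by linarith) (by linarith) (x ^ 2 / 4)
      rw [sub_add_cancel, sub_add_cancel] at hs
      have hA := cf_pos (a := a - 1) (b := b - 1) (by linarith) (by linarith) 0
      have hq := E_pos (y := x ^ 2 / 4) ha0 (show 0 < b by linarith) (by positivity)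
      have hw : x ^ (2 * a - 1) = x ^ (2 * a - 1 - 1) * x := by
        rw [← Real.rpow_add_one hx.ne']; ring_nf
      have hw0 : 0 < x ^ (2 * a - 1 - 1) := Real.rpow_pos_of_pos hx _
      have he := Real.exp_pos x
      have key : deriv (fun x : ℝ => x ^ (2 * a - 1) * Real.exp x * g x) x =
          x ^ (2 * a - 1 - 1) * Real.exp x * (2 * cf (a - 1) (b - 1) 0 +
            E a b (x ^ 2 / 4) * (((2 * (b - a) - 3) * x + (2 * (b - a) - 1)) / 2)) := by
        refine (HasDerivAt.congr_deriv d4 ?_).deriv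
        simp only [Pi.mul_apply, Pi.sub_apply, id]
        rw [hs, hw]
        field_simp
        ring
      rw [key]
      have : 0 ≤ (2 * (b - a) - 3) * x := mul_nonneg (by linarith) hx.le
      have : 0 < ((2 * (b - a) - 3) * x + (2 * (b - a) - 1)) / 2 := by linarith
      positivity
  have h := hmono (Set.mem_Ici.2 le_rfl) (Set.mem_Ici.2 hx.le) hx
  simp only [Real.zero_rpow (show 2 * a - 1 ≠ 0 by linarith), zero_mul] at h
  have hw0 : 0 < x ^ (2 * a - 1) * Real.exp x := by positivity
  have := (pos_iff_pos_of_mul_pos h).1 hw0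
  simp only [hg] at this
  linarith

/-! ### The integral inequality for `E` -/

/-- The inequality of the theorem in terms of `E`, with `m = μ + ν` and `ν = b - a`, for any
coefficient `C / x` with `C > 2 ν / (1 - β)`; the theorem uses
`C = 4 ν ^ 2 / ((2 ν - 1) (1 - β))`. -/
lemma H_pos {a b m β C x : ℝ} (ha : 1 < a) (hab : 3 / 2 ≤ b - a) (hm : m = 2 * b - 3)
    (hβ1 : 0 < β) (hβ2 : β < 1) (hC : 2 * (b - a) < C * (1 - β)) (hx : 0 < x) :
    0 < (1 - β) * (∫ u in (0:ℝ)..x, Real.exp (-β * u) * u ^ m * (u ^ 2 / 4 * E a (b + 1) (u ^ 2 / 4)))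
      - Real.exp (-β * x) * x ^ m * (x / 2 * E a b (x ^ 2 / 4))
      + C * (Real.exp (-β * x) * x ^ m * (E a b (x ^ 2 / 4) / 2))
      + cf (a - 1) b 0 * ∫ u in (0:ℝ)..x, Real.exp (-β * u) * u ^ m := by
  have ha0 : 0 < a := by linarith
  have hsq : Continuous fun x : ℝ => x ^ 2 / 4 := by fun_prop
  have cm : Continuous fun x : ℝ => x ^ m := Real.continuous_rpow_const (by linarith)
  have cq : Continuous fun x : ℝ => E a b (x ^ 2 / 4) :=
    (continuous_E ha0 (by linarith)).comp hsq
  have cr : Continuous fun x : ℝ => E a (b + 1) (x ^ 2 / 4) :=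
    (continuous_E ha0 (by linarith)).comp hsq
  have cw : Continuous fun u : ℝ => Real.exp (-β * u) * u ^ m := by fun_prop
  have cj : Continuous fun u : ℝ =>
      Real.exp (-β * u) * u ^ m * (u ^ 2 / 4 * E a (b + 1) (u ^ 2 / 4)) := by fun_prop
  have dJ := fun x : ℝ => intervalIntegral.integral_hasDerivAt_right
    (cj.intervalIntegrable 0 x) (cj.stronglyMeasurableAtFilter _ _) cj.continuousAt
  have dB := fun x : ℝ => intervalIntegral.integral_hasDerivAt_right
    (cw.intervalIntegrable 0 x) (cw.stronglyMeasurableAtFilter _ _) cw.continuousAt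
  set H : ℝ → ℝ := fun x => (1 - β) *
      (∫ u in (0:ℝ)..x, Real.exp (-β * u) * u ^ m * (u ^ 2 / 4 * E a (b + 1) (u ^ 2 / 4)))
      - Real.exp (-β * x) * x ^ m * (x / 2 * E a b (x ^ 2 / 4))
      + C * (Real.exp (-β * x) * x ^ m * (E a b (x ^ 2 / 4) / 2))
      + cf (a - 1) b 0 * ∫ u in (0:ℝ)..x, Real.exp (-β * u) * u ^ m with hH
  have hmono : StrictMonoOn H (Set.Ici 0) := by
    refine strictMonoOn_of_deriv_pos (convex_Ici 0) ?_ ?_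
    · have cJ := continuous_iff_continuousAt.2 fun x => (dJ x).continuousAt
      have cB := continuous_iff_continuousAt.2 fun x => (dB x).continuousAt
      exact Continuous.continuousOn (by fun_prop)
    · intro x hx
      rw [interior_Ici] at hx
      have hx : 0 < x := hx
      have d2 := hasDerivAt_E_sq (x := x) (a := a) (b := b) ha0 (by linarith) hx
      have d3 : HasDerivAt (fun x : ℝ => x ^ m) _ x :=
        Real.hasDerivAt_rpow_const (Or.inl hx.ne')
      have dw := (((hasDerivAt_id x).const_mul (-β)).exp).mul d3
      have d4 := ((((dJ x).const_mul (1 - β)).sub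
        (dw.mul (((hasDerivAt_id x).div_const 2).mul d2))).add
        ((dw.mul (d2.div_const 2)).const_mul C)).add ((dB x).const_mul (cf (a - 1) b 0))
      have hs := E_shift (a := a - 1) (b := b) (by linarith) (by linarith) (x ^ 2 / 4)
      rw [sub_add_cancel] at hs
      have hp := E_sub (a := a) (b := b) ha (by linarith) (x ^ 2 / 4)
      have hq := E_pos (y := x ^ 2 / 4) ha0 (show 0 < b by linarith) (by positivity)
      have hr := E_pos (y := x ^ 2 / 4) ha0 (show 0 < b + 1 by linarith) (by positivity)
      have r1 := ratio_bound (b := b) ha hab hx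
      have r2 := ratio_bound (b := b + 1) ha (by linarith) hx
      rw [add_sub_cancel_right] at r2
      have hw : x ^ m = x ^ (m - 1) * x := by
        rw [← Real.rpow_add_one hx.ne']; ring_nf
      have hw0 : 0 < x ^ (m - 1) := Real.rpow_pos_of_pos hx _
      have he := Real.exp_pos (-β * x)
      set q := E a b (x ^ 2 / 4)
      set r := E a (b + 1) (x ^ 2 / 4)
      set p := E a (b - 1) (x ^ 2 / 4)
      have key : deriv H x = x ^ (m - 1) * Real.exp (-β * x) *
          (x * (β * (x / 2 * (q - x / 2 * r)) - (b - a) * q)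
            + C / 2 * (2 * p - (1 + β * x) * q)) := by
        refine (HasDerivAt.congr_deriv d4 ?_).deriv
        simp only [Pi.mul_apply, id]
        have hA : cf (a - 1) b 0 = p - (b - a) * q - x ^ 2 / 4 * r := by linarith
        rw [hA, hw, hm]
        field_simp
        ring
      rw [key]
      have hC0 : 0 < C := by
        have : 0 < C * (1 - β) := by linarith
        exact (pos_iff_pos_of_mul_pos this).2 (by linarith)
      have t1 : 0 < q - x / 2 * r := by nlinarith
      have t2 : 0 < x * (β * (x / 2 * (q - x / 2 * r))) := by positivity
      have t3 : C / 2 * ((1 - β) * x * q) ≤ C / 2 * (2 * p - (1 + β * x) * q) := by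
        gcongr; linarith
      have t4 : 0 < x * q * (C * (1 - β) - 2 * (b - a)) :=
        mul_pos (by positivity) (by linarith)
      refine mul_pos (by positivity) ?_
      nlinarith
  have h := hmono (Set.mem_Ici.2 le_rfl) (Set.mem_Ici.2 hx.le) hx
  have h0 : H 0 = 0 := by
    simp [hH, Real.zero_rpow (show m ≠ 0 by linarith)]
  rwa [h0] at h

/-! ### Translation to Lommel functions -/

lemma lommel_eq {μ ν x : ℝ} (hμ : 0 < μ + 1) (hx : 0 ≤ x) :
    lommel μ ν x = (x / 2) ^ (μ + 1) * E ((μ - ν + 3) / 2) ((μ + ν + 3) / 2) (x ^ 2 / 4) := by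
  unfold lommel E
  rw [← tsum_mul_left]
  refine tsum_congr fun k => ?_
  have : (x / 2) ^ (μ + 2 * (k:ℝ) + 1) = (x / 2) ^ (μ + 1) * (x ^ 2 / 4) ^ k := by
    rw [show μ + 2 * (k:ℝ) + 1 = (μ + 1) + ((2 * k : ℕ) : ℝ) by push_cast; ring,
      Real.rpow_add' (by positivity) (by positivity), Real.rpow_natCast, pow_mul]
    ring_nf
  rw [this]; unfold cf; ring

/-- Substituting `u = β v` in the incomplete gamma integral. -/
lemma Bconst_eq {μ ν β x : ℝ} (hβ : 0 < β) (hx : 0 ≤ x) :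
    Bconst μ ν β x = ((2:ℝ) ^ μ)⁻¹ * (cf ((μ - ν + 3) / 2 - 1) ((μ + ν + 3) / 2) 0 *
      ∫ u in (0:ℝ)..x, Real.exp (-β * u) * u ^ (μ + ν)) := by
  have h1 : lowerGamma (μ + ν + 1) (β * x) =
      β ^ (μ + ν + 1) * ∫ u in (0:ℝ)..x, Real.exp (-β * u) * u ^ (μ + ν) := by
    have h := intervalIntegral.integral_comp_mul_left (a := 0) (b := x)
      (fun u : ℝ => Real.exp (-u) * u ^ (μ + ν)) hβ.ne'
    have h2 : ∫ u in (0:ℝ)..x, Real.exp (-(β * u)) * (β * u) ^ (μ + ν) =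
        β ^ (μ + ν) * ∫ u in (0:ℝ)..x, Real.exp (-β * u) * u ^ (μ + ν) := by
      rw [← intervalIntegral.integral_const_mul]
      refine intervalIntegral.integral_congr fun u hu => ?_
      rw [Set.uIcc_of_le hx] at hu
      rw [Real.mul_rpow hβ.le hu.1, neg_mul]; ring
    rw [h2, mul_zero, smul_eq_mul] at h
    unfold lowerGamma
    rw [add_sub_cancel_right, Real.rpow_add_one hβ.ne', mul_right_comm, h]
    field_simp
  have h3 : β ^ (-μ - ν - 1) * β ^ (μ + ν + 1) = 1 := by
    rw [← Real.rpow_add hβ]; ring_nf; simp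
  unfold Bconst cf
  rw [h1, ← mul_assoc, h3]
  rw [show (μ - ν + 3) / 2 - 1 = (μ - ν + 1) / 2 by ring]
  simp only [Nat.cast_zero, zero_add, mul_inv, div_eq_mul_inv]
  ring

theorem stmt9 (μ ν β : ℝ) (hμ : μ > 1/2) (hν1 : 3/2 ≤ ν) (hν2 : ν < μ + 1)
    (hβ1 : 0 < β) (hβ2 : β < 1) :
    ∀ x : ℝ, 0 < x →
      ∫ u in (0:ℝ)..x, Real.exp (-β * u) * u ^ ν * lommel (μ + 1) (ν + 1) u >
        1 / (1 - β) *
          ((1 - 4 * ν ^ 2 / ((2 * ν - 1) * (1 - β) * x)) *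
              (Real.exp (-β * x) * x ^ ν * lommel μ ν x) - Bconst μ ν β x) := by
  intro x hx
  have hβ : 0 < 1 - β := by linarith
  have hν : 0 < 2 * ν - 1 := by linarith
  set a := (μ - ν + 3) / 2 with ha
  set b := (μ + ν + 3) / 2 with hb
  have hba : b - a = ν := by rw [ha, hb]; ring
  set C := 4 * ν ^ 2 / ((2 * ν - 1) * (1 - β)) with hCdef
  have hC : 2 * (b - a) < C * (1 - β) := by
    have : C * (1 - β) = 4 * ν ^ 2 / (2 * ν - 1) := by rw [hCdef]; field_simp
    rw [this, hba, lt_div_iff₀ hν]; nlinarith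
  have hH := H_pos (a := a) (b := b) (m := μ + ν) (β := β) (C := C) (x := x)
    (by rw [ha]; linarith) (by linarith) (by rw [hb]; ring) hβ1 hβ2 hC hx
  have hJ : ∫ u in (0:ℝ)..x, Real.exp (-β * u) * u ^ ν * lommel (μ + 1) (ν + 1) u =
      ((2:ℝ) ^ μ)⁻¹ * ∫ u in (0:ℝ)..x,
        Real.exp (-β * u) * u ^ (μ + ν) * (u ^ 2 / 4 * E a (b + 1) (u ^ 2 / 4)) := by
    rw [← intervalIntegral.integral_const_mul]
    refine intervalIntegral.integral_congr fun u hu => ?_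
    rw [Set.uIcc_of_le hx.le] at hu
    have hu0 : 0 ≤ u := hu.1
    rw [lommel_eq (by linarith) hu0, show (μ + 1 - (ν + 1) + 3) / 2 = a by rw [ha]; ring,
      show (μ + 1 + (ν + 1) + 3) / 2 = b + 1 by rw [hb]; ring,
      Real.rpow_add' (x := u) hu0 (by linarith),
      show μ + 1 + 1 = μ + ((2:ℕ):ℝ) by push_cast; ring,
      Real.rpow_add' (by positivity) (by push_cast; linarith), Real.rpow_natCast,
      Real.div_rpow hu0 (by norm_num)]
    field_simp
    norm_num
  have hF : Real.exp (-β * x) * x ^ ν * lommel μ ν x =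
      ((2:ℝ) ^ μ)⁻¹ * (Real.exp (-β * x) * x ^ (μ + ν) * (x / 2 * E a b (x ^ 2 / 4))) := by
    rw [lommel_eq (by linarith) hx.le, ← ha, ← hb, Real.rpow_add hx, Real.rpow_add_one (by positivity),
      Real.div_rpow hx.le (by norm_num)]
    field_simp
  have h2 : (0:ℝ) < ((2:ℝ) ^ μ)⁻¹ := by positivity
  have hH2 := mul_pos h2 hH
  rw [hJ, hF, Bconst_eq hβ1 hx.le, gt_iff_lt, one_div, inv_mul_lt_iff₀ hβ, ← ha, ← hb]
  have hCx : 4 * ν ^ 2 / ((2 * ν - 1) * (1 - β) * x) = C / x := by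
    rw [hCdef, div_div]
  rw [hCx, ← sub_pos]
  refine hH2.trans_eq ?_
  field_simp
  ring
end

section
/- Let ν > −1/2 and 0 < β < 1. Then for all x > 0, ∫_0^x e^{−βu} u^ν L_ν(u) du < ((2ν+3+√(2(2ν+3)))/((2ν+1)(1−β))) · e^{−βx} x^ν L_{ν+1}(x). -/
/-!
Write `a = ν + 1/2`, `s = 1 - β`, `f(x) = x^ν L_ν(x)` and `g(x) = x^ν L_{ν+1}(x)`, so that
`g' = f - g / x`. The integral of `e^{-βu} f(u)` is bounded by the barrier

`Φ(x) = (2a + 2) / (2a + 1) * e^{-βx} g(x) (1 + β D(x))`, `D(x) = (1 + 1/a) x / (1 + s x)`,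

which is continuous, vanishes at `0` and satisfies `Φ' ≥ e^{-βx} f`. Two lower bounds for
`L_ν / L_{ν+1}` give this differential inequality (`barrier_ineq`). The bound by `(2a + 2) / x` is
immediate from the series and absorbs the term `g / x`. The bound by `1 + a / x` (`struve_ratio`)
is sharp enough at infinity to make `D` a supersolution; it follows from the second-order
differential equation of `L_{ν+1}` through an integrating factor.

Finally `β D ≤ β (1 + 1/a) / s`, so `Φ` is at most `(2a + 2)(a + 1) / ((2a + 1) a s) * e^{-βx} g`,
and this constant is less than `(a + 2) / (a s)`, which is less than the required one because
`√(2 (2ν + 3)) > 2`.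

The Struve functions are written as powers of `x` times the entire series `struveSeries`, which are
differentiated term by term.
-/

open Real MeasureTheory

/-- Modified Struve function of the first kind. -/
noncomputable def struveL (ν x : ℝ) : ℝ :=
  ∑' k : ℕ, (x / 2) ^ (ν + 2 * (k : ℝ) + 1) /
    (Real.Gamma ((k : ℝ) + 3 / 2) * Real.Gamma ((k : ℝ) + ν + 3 / 2))

/-! ### The series of the Struve functions -/

/-- The Taylor coefficients, in powers of `(x / 2) ^ 2`, of `(x / 2) ^ (-(ν + 2)) * L_{ν+1}(x)`. -/
noncomputable def struveCoeff (ν : ℝ) (k : ℕ) : ℝ :=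
  1 / (Real.Gamma ((k : ℝ) + 3 / 2) * Real.Gamma ((k : ℝ) + (ν + 1) + 3 / 2))

/-- The entire series `∑ k ^ j * d_k * (x / 2) ^ (2 k)`, where `d_k = struveCoeff ν k`. For `j = 0`
it is `(x / 2) ^ (-(ν + 2)) * L_{ν+1}(x)` (for `x > 0`), and raising `j` by one amounts to applying `(x / 2) d/dx`. -/
noncomputable def struveSeries (ν : ℝ) (j : ℕ) (x : ℝ) : ℝ :=
  ∑' k : ℕ, (k : ℝ) ^ j * struveCoeff ν k * (x / 2) ^ (2 * k)

lemma struveCoeff_pos {ν : ℝ} (hν : -1 / 2 < ν) (k : ℕ) : 0 < struveCoeff ν k := by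
  have hk : (0 : ℝ) ≤ k := k.cast_nonneg
  have h1 := Real.Gamma_pos_of_pos (s := (k : ℝ) + 3 / 2) (by linarith)
  have h2 := Real.Gamma_pos_of_pos (s := (k : ℝ) + (ν + 1) + 3 / 2) (by linarith)
  unfold struveCoeff
  positivity

lemma struveCoeff_succ {ν : ℝ} (hν : -1 / 2 < ν) (k : ℕ) :
    (k + 3 / 2) * (k + ν + 5 / 2) * struveCoeff ν (k + 1) = struveCoeff ν k := by
  have hk : (0 : ℝ) ≤ k := k.cast_nonneg
  have h1 := Real.Gamma_pos_of_pos (s := (k : ℝ) + 3 / 2) (by linarith)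
  have h2 := Real.Gamma_pos_of_pos (s := (k : ℝ) + (ν + 1) + 3 / 2) (by linarith)
  have e1 : Real.Gamma (((k + 1 : ℕ) : ℝ) + 3 / 2) = (k + 3 / 2) * Real.Gamma (k + 3 / 2) := by
    rw [← Real.Gamma_add_one (by linarith)]
    push_cast
    ring_nf
  have e2 : Real.Gamma (((k + 1 : ℕ) : ℝ) + (ν + 1) + 3 / 2) =
      (k + (ν + 1) + 3 / 2) * Real.Gamma (k + (ν + 1) + 3 / 2) := by
    rw [← Real.Gamma_add_one (by linarith)]
    push_cast
    ring_nf
  have h3 : (k : ℝ) + (ν + 1) + 3 / 2 ≠ 0 := by linarith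
  have h4 : (k : ℝ) + 3 / 2 ≠ 0 := by linarith
  unfold struveCoeff
  rw [e1, e2, show (k : ℝ) + ν + 5 / 2 = k + (ν + 1) + 3 / 2 by ring]
  generalize Real.Gamma ((k : ℝ) + (ν + 1) + 3 / 2) = g₁ at *
  generalize (k : ℝ) + (ν + 1) + 3 / 2 = n₁ at *
  field_simp

lemma struveCoeff_le {ν : ℝ} (hν : -1 / 2 < ν) (k : ℕ) :
    struveCoeff ν k ≤ struveCoeff ν 0 / (k.factorial : ℝ) := by
  induction k with
  | zero => simp
  | succ k ih =>
    have hk : (0 : ℝ) ≤ k := k.cast_nonneg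
    have hp := struveCoeff_pos hν (k + 1)
    have h := struveCoeff_succ hν k
    have hf : (0 : ℝ) < k.factorial := by positivity
    rw [le_div_iff₀ hf] at ih
    rw [le_div_iff₀ (by positivity), Nat.factorial_succ]
    push_cast
    have : (k + 1) * struveCoeff ν (k + 1) ≤ struveCoeff ν k := by
      rw [← h]
      apply mul_le_mul_of_nonneg_right _ hp.le
      nlinarith
    nlinarith

lemma summable_struve {ν : ℝ} (hν : -1 / 2 < ν) (j : ℕ) (r : ℝ) (hr : 0 ≤ r) :
    Summable fun k : ℕ => (k : ℝ) ^ j * struveCoeff ν k * r ^ (2 * k) := by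
  have hs := (Real.summable_pow_div_factorial (2 ^ j * r ^ 2)).mul_left (struveCoeff ν 0)
  refine Summable.of_nonneg_of_le (fun k => ?_) (fun k => ?_) hs
  · have := struveCoeff_pos hν k
    positivity
  · have hk : (k : ℝ) ≤ 2 ^ k := by exact_mod_cast (Nat.lt_two_pow_self (n := k)).le
    have h1 : (k : ℝ) ^ j ≤ (2 ^ j) ^ k := by
      rw [← pow_mul, mul_comm j k, pow_mul]
      exact pow_le_pow_left₀ k.cast_nonneg hk j
    have h0 := struveCoeff_pos hν k
    calc (k : ℝ) ^ j * struveCoeff ν k * r ^ (2 * k)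
        ≤ (2 ^ j) ^ k * (struveCoeff ν 0 / (k.factorial : ℝ)) * r ^ (2 * k) := by
          gcongr
          exact struveCoeff_le hν k
      _ = struveCoeff ν 0 * ((2 ^ j * r ^ 2) ^ k / (k.factorial : ℝ)) := by
          rw [mul_pow, pow_mul]
          ring

lemma struveSeries_nonneg {ν : ℝ} (hν : -1 / 2 < ν) (j : ℕ) (x : ℝ) :
    0 ≤ struveSeries ν j x := by
  refine tsum_nonneg fun k => ?_
  have := struveCoeff_pos hν k
  have : 0 ≤ (x / 2) ^ (2 * k) := by rw [pow_mul]; positivity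
  positivity

lemma struveSeries_zero_pos {ν : ℝ} (hν : -1 / 2 < ν) {x : ℝ} (hx : 0 < x) :
    0 < struveSeries ν 0 x := by
  refine (summable_struve hν 0 (x / 2) (by positivity)).tsum_pos (fun k => ?_) 0 ?_
  · have := struveCoeff_pos hν k
    positivity
  · simpa using struveCoeff_pos hν 0

lemma hasDerivAt_struveSeries {ν : ℝ} (hν : -1 / 2 < ν) (j : ℕ) {x : ℝ} (hx : 0 < x) :
    HasDerivAt (struveSeries ν j) (2 / x * struveSeries ν (j + 1) x) x := by
  have hR : (1 : ℝ) ≤ x + 2 := by linarith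
  have key := hasDerivAt_tsum_of_isPreconnected
    (g := fun (k : ℕ) (y : ℝ) => (k : ℝ) ^ j * struveCoeff ν k * (y / 2) ^ (2 * k))
    (g' := fun (k : ℕ) (y : ℝ) => (k : ℝ) ^ j * struveCoeff ν k *
      ((2 * k : ℕ) * (y / 2) ^ (2 * k - 1) * (1 / 2)))
    (t := Set.Ioo 0 (x + 1)) (y₀ := x) (y := x)
    (summable_struve hν (j + 1) (x + 2) (by linarith)) isOpen_Ioo isPreconnected_Ioo
    ?_ ?_ ⟨hx, by linarith⟩ (summable_struve hν j (x / 2) (by positivity)) ⟨hx, by linarith⟩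
  · refine key.congr_deriv ?_
    unfold struveSeries
    rw [← tsum_mul_left]
    refine tsum_congr fun k => ?_
    rcases k with _ | k
    · simp
    · rw [show 2 * (k + 1) = (2 * (k + 1) - 1) + 1 by omega, pow_succ (x / 2)]
      rw [show 2 * (k + 1) - 1 + 1 - 1 = 2 * (k + 1) - 1 by omega,
        show 2 * (k + 1) - 1 + 1 = 2 * (k + 1) by omega]
      push_cast
      field_simp
      ring
  · intro k y _
    have h := (((hasDerivAt_id y).div_const 2).pow (2 * k)).const_mul
      ((k : ℝ) ^ j * struveCoeff ν k)
    simpa using h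
  · intro k y hy
    have h0 := struveCoeff_pos hν k
    have hy0 : 0 < y := hy.1
    rw [Real.norm_of_nonneg (by positivity)]
    have h1 : (y / 2) ^ (2 * k - 1) ≤ (x + 2) ^ (2 * k) :=
      calc (y / 2) ^ (2 * k - 1) ≤ (x + 2) ^ (2 * k - 1) := by
            have := hy.2
            gcongr
            linarith
        _ ≤ (x + 2) ^ (2 * k) := pow_le_pow_right₀ hR (by omega)
    calc (k : ℝ) ^ j * struveCoeff ν k * ((2 * k : ℕ) * (y / 2) ^ (2 * k - 1) * (1 / 2))
        = (k : ℝ) ^ (j + 1) * struveCoeff ν k * (y / 2) ^ (2 * k - 1) := by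
          push_cast
          ring
      _ ≤ _ := by gcongr

lemma continuousOn_struveSeries {ν : ℝ} (hν : -1 / 2 < ν) (j : ℕ) (R : ℝ) :
    ContinuousOn (struveSeries ν j) (Set.Icc 0 R) := by
  rcases lt_or_ge R 0 with h | hR
  · simp [Set.Icc_eq_empty (not_le.mpr h)]
  refine continuousOn_tsum (fun k => by fun_prop) (summable_struve hν j (R / 2) (by positivity)) ?_
  intro k y hy
  have h0 := struveCoeff_pos hν k
  have hy0 : 0 ≤ y := hy.1
  have hy1 : y ≤ R := hy.2
  rw [Real.norm_of_nonneg (by positivity)]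
  gcongr

/-! ### The differential equation and the ratio bound -/

/-- The second-order differential equation of `L_{ν+1}`, with its positive inhomogeneous term
dropped. It is the recursion `struveCoeff_succ` summed over `k`. -/
lemma struve_ode {ν : ℝ} (hν : -1 / 2 < ν) {x : ℝ} (hx : 0 < x) :
    x ^ 2 * struveSeries ν 0 x ≤
      4 * struveSeries ν 2 x + (4 * ν + 8) * struveSeries ν 1 x
        + (2 * ν + 3) * struveSeries ν 0 x := by
  have s0 := summable_struve hν 0 (x / 2) (by positivity)
  have s1 := summable_struve hν 1 (x / 2) (by positivity)
  have s2 := summable_struve hν 2 (x / 2) (by positivity)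
  have e := ((s2.mul_left 4).add (s1.mul_left (4 * ν + 8))).add (s0.mul_left (2 * ν + 3))
  unfold struveSeries
  rw [← tsum_mul_left, ← tsum_mul_left, ← tsum_mul_left, ← tsum_mul_left,
    ← (s2.mul_left 4).tsum_add (s1.mul_left (4 * ν + 8)),
    ← ((s2.mul_left 4).add (s1.mul_left (4 * ν + 8))).tsum_add (s0.mul_left (2 * ν + 3)),
    e.tsum_eq_zero_add]
  have h0 : 0 ≤ (2 * ν + 3) * struveCoeff ν 0 :=
    mul_nonneg (by linarith) (struveCoeff_pos hν 0).le
  have h1 : ∀ k : ℕ, x ^ 2 * ((k : ℝ) ^ 0 * struveCoeff ν k * (x / 2) ^ (2 * k)) =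
      4 * (((k + 1 : ℕ) : ℝ) ^ 2 * struveCoeff ν (k + 1) * (x / 2) ^ (2 * (k + 1)))
      + (4 * ν + 8) * (((k + 1 : ℕ) : ℝ) ^ 1 * struveCoeff ν (k + 1) * (x / 2) ^ (2 * (k + 1)))
      + (2 * ν + 3) *
        (((k + 1 : ℕ) : ℝ) ^ 0 * struveCoeff ν (k + 1) * (x / 2) ^ (2 * (k + 1))) := by
    intro k
    rw [← struveCoeff_succ hν k, show 2 * (k + 1) = 2 * k + 2 by ring, pow_add]
    push_cast
    ring
  rw [tsum_congr h1]
  simpa using h0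

/-- The lower bound `L_ν(x) / L_{ν+1}(x) ≥ 1 + (ν + 1/2) / x`, written for the series. With `Q` the
right-hand side minus the left-hand side and `a = ν + 1/2`, the differential equation gives
`x Q' + (a + 1 + x) Q ≥ a (a + 1) struveSeries ν 0 x ≥ 0`, so `x ^ (a + 1) * exp x * Q` increases
from `0`. -/
lemma struve_ratio {ν : ℝ} (hν : -1 / 2 < ν) {x : ℝ} (hx : 0 < x) :
    x * struveSeries ν 0 x ≤ 2 * struveSeries ν 1 x + (ν + 5 / 2) * struveSeries ν 0 x := by
  set W : ℝ → ℝ := fun y => y ^ (ν + 3 / 2) * Real.exp y *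
    (2 * struveSeries ν 1 y + (ν + 5 / 2 - y) * struveSeries ν 0 y) with hW
  have hmono : MonotoneOn W (Set.Icc 0 x) := by
    refine monotoneOn_of_hasDerivWithinAt_nonneg (convex_Icc 0 x) ?_ (f' := fun y =>
      ((ν + 3 / 2) * y ^ (ν + 3 / 2 - 1) * Real.exp y + y ^ (ν + 3 / 2) * Real.exp y) *
        (2 * struveSeries ν 1 y + (ν + 5 / 2 - y) * struveSeries ν 0 y)
      + y ^ (ν + 3 / 2) * Real.exp y * (2 * (2 / y * struveSeries ν 2 y) +
        ((-1) * struveSeries ν 0 y + (ν + 5 / 2 - y) * (2 / y * struveSeries ν 1 y)))) ?_ ?_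
    · have c0 := continuousOn_struveSeries hν 0 x
      have c1 := continuousOn_struveSeries hν 1 x
      have c2 : ContinuousOn (fun y : ℝ => y ^ (ν + 3 / 2)) (Set.Icc 0 x) :=
        (Real.continuous_rpow_const (by linarith)).continuousOn
      fun_prop
    · intro y hy
      rw [interior_Icc] at hy
      have hy0 : 0 < y := hy.1
      have d1 := hasDerivAt_struveSeries hν 1 hy0
      have d0 := hasDerivAt_struveSeries hν 0 hy0
      have dr : HasDerivAt (fun y : ℝ => y ^ (ν + 3 / 2)) ((ν + 3 / 2) * y ^ (ν + 3 / 2 - 1)) y :=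
        Real.hasDerivAt_rpow_const (Or.inl hy0.ne')
      have dl : HasDerivAt (fun y : ℝ => ν + 5 / 2 - y) (-1) y := by
        simpa using (hasDerivAt_id y).const_sub (ν + 5 / 2)
      exact ((dr.mul (Real.hasDerivAt_exp y)).mul
        ((d1.const_mul 2).add (dl.mul d0))).hasDerivWithinAt
    · intro y hy
      rw [interior_Icc] at hy
      have hy0 : 0 < y := hy.1
      have hode := struve_ode hν hy0
      have h0 := struveSeries_nonneg hν 0 y
      have e : y ^ (ν + 3 / 2) = y ^ (ν + 3 / 2 - 1) * y := by
        rw [← Real.rpow_add_one hy0.ne']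
        ring_nf
      have hp : 0 < y ^ (ν + 3 / 2 - 1) := Real.rpow_pos_of_pos hy0 _
      have he := Real.exp_pos y
      rw [e]
      have : 0 ≤ (y ^ (ν + 3 / 2 - 1) * Real.exp y) *
          ((4 * struveSeries ν 2 y + (4 * ν + 8) * struveSeries ν 1 y
            + (2 * ν + 3) * struveSeries ν 0 y - y ^ 2 * struveSeries ν 0 y)
            + (ν + 1 / 2) * (ν + 3 / 2) * struveSeries ν 0 y) := by
        apply mul_nonneg (by positivity)
        have : 0 ≤ (ν + 1 / 2) * (ν + 3 / 2) * struveSeries ν 0 y :=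
          mul_nonneg (mul_nonneg (by linarith) (by linarith)) h0
        linarith
      refine this.trans_eq ?_
      field_simp
      ring
  have h := hmono ⟨le_rfl, hx.le⟩ ⟨hx.le, le_rfl⟩ hx.le
  have hz : W 0 = 0 := by
    simp [hW, Real.zero_rpow (show ν + 3 / 2 ≠ 0 by linarith)]
  rw [hz] at h
  have hp : 0 < x ^ (ν + 3 / 2) * Real.exp x :=
    mul_pos (Real.rpow_pos_of_pos hx _) (Real.exp_pos x)
  have := nonneg_of_mul_nonneg_right h hp
  linarith

/-! ### The barrier -/

lemma struveL_succ_eq {ν : ℝ} {x : ℝ} (hx : 0 < x) :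
    struveL (ν + 1) x = (x / 2) ^ (ν + 2) * struveSeries ν 0 x := by
  unfold struveL struveSeries
  rw [← tsum_mul_left]
  congr 1
  ext k
  rw [show ν + 1 + 2 * (k : ℝ) + 1 = (ν + 2) + ((2 * k : ℕ) : ℝ) by push_cast; ring,
    Real.rpow_add (by positivity), Real.rpow_natCast]
  unfold struveCoeff
  rw [show (k : ℝ) + (ν + 1) + 3 / 2 = k + (ν + 1) + 3 / 2 by ring]
  ring

lemma struveL_eq {ν : ℝ} (hν : -1 / 2 < ν) {x : ℝ} (hx : 0 < x) :
    struveL ν x = (x / 2) ^ (ν + 1) *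
      (struveSeries ν 1 x + (ν + 3 / 2) * struveSeries ν 0 x) := by
  have s0 := summable_struve hν 0 (x / 2) (by positivity)
  have s1 := summable_struve hν 1 (x / 2) (by positivity)
  unfold struveL struveSeries
  rw [← tsum_mul_left (a := ν + 3 / 2), ← s1.tsum_add (s0.mul_left _), ← tsum_mul_left]
  congr 1
  ext k
  rw [show ν + 2 * (k : ℝ) + 1 = (ν + 1) + ((2 * k : ℕ) : ℝ) by push_cast; ring,
    Real.rpow_add (by positivity), Real.rpow_natCast]
  unfold struveCoeff
  have hk : (0 : ℝ) ≤ k := k.cast_nonneg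
  have h1 := Real.Gamma_pos_of_pos (s := (k : ℝ) + 3 / 2) (by linarith)
  have h2 := Real.Gamma_pos_of_pos (s := (k : ℝ) + ν + 3 / 2) (by linarith)
  have h3 : (k : ℝ) + ν + 3 / 2 ≠ 0 := by linarith
  rw [show (k : ℝ) + (ν + 1) + 3 / 2 = (k + ν + 3 / 2) + 1 by ring, Real.Gamma_add_one h3]
  have e : (k : ℝ) ^ 1 + (ν + 3 / 2) * (k : ℝ) ^ 0 = k + ν + 3 / 2 := by ring
  rw [← mul_assoc (ν + 3 / 2), ← mul_assoc (ν + 3 / 2), ← add_mul, ← add_mul, e]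
  generalize Real.Gamma ((k : ℝ) + ν + 3 / 2) = g₁ at *
  generalize (k : ℝ) + ν + 3 / 2 = n₁ at *
  field_simp

/-- The function `2 ^ (ν + 2) * e^{-βx} x^ν L_{ν+1}(x)` for `x > 0`, written through the series so
that it is continuous at `0` as well. -/
noncomputable def struveG (ν β x : ℝ) : ℝ :=
  Real.exp (-β * x) * (x ^ (2 * ν + 2) * struveSeries ν 0 x)

lemma rpow_split {ν x : ℝ} (hx : 0 < x) :
    x ^ ν * (x / 2) ^ (ν + 1) = (1 / 2) ^ (ν + 1) * x ^ (2 * ν + 1) := by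
  rw [div_eq_mul_one_div x 2, Real.mul_rpow hx.le (by norm_num),
    show 2 * ν + 1 = ν + (ν + 1) by ring, Real.rpow_add hx ν (ν + 1)]
  ring

/-- The differential inequality `Φ' ≥ e^{-βx} x^ν L_ν(x)` for the barrier `Φ`, divided by
`(2a + 2) / (2a + 1) * e^{-βx} x^{2a} / 2^{ν+1}`, where `a = ν + 1/2`. Here `Tⱼ` stands for
`struveSeries ν j x`, so that `L_ν(x)` corresponds to `T₁ + (a + 1) T₀` and `x^{-1} L_{ν+1}(x)` to
`T₀ / 2`. -/
lemma barrier_ineq {a β x T₀ T₁ : ℝ} (ha : 0 < a) (hβ : 0 < β) (hβ2 : β < 1) (hx : 0 < x)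
    (h0 : 0 < T₀) (h1 : 0 ≤ T₁) (hr : x * T₀ ≤ 2 * T₁ + (a + 2) * T₀) :
    (T₁ + (a + 1) * T₀) * ((2 * a + 1) / (2 * a + 2)) ≤
      (T₁ + (a + 1 / 2) * T₀ - β * x * T₀ / 2) *
          (1 + β * ((1 + 1 / a) * x / (1 + (1 - β) * x)))
        + β * ((1 + 1 / a) / (1 + (1 - β) * x) ^ 2) * (x * T₀ / 2) := by
  set y := (1 - β) * x with hy
  have hy0 : 0 < y := mul_pos (by linarith) hx
  set D := (1 + 1 / a) * x / (1 + y) with hD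
  have hD0 : 0 < D := by positivity
  have e1 : (T₁ + (a + 1) * T₀) * ((2 * a + 1) / (2 * a + 2)) ≤ T₁ + (a + 1 / 2) * T₀ := by
    rw [← mul_div_assoc, div_le_iff₀ (by positivity)]
    nlinarith
  -- `D` is a supersolution: `x D' + (y + a - 1) D ≥ x`. The constant `1 + 1 / a` makes the
  -- difference a square plus a nonnegative term.
  have e2 : x ≤ D * (y + a - 1) + x * ((1 + 1 / a) / (1 + y) ^ 2) := by
    have : D * (y + a - 1) + x * ((1 + 1 / a) / (1 + y) ^ 2) - x =
        x * ((y - a) ^ 2 + a * (1 + a) * y) / (a * (1 + y) ^ 2) := by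
      rw [hD]
      field_simp
      ring
    have : 0 ≤ x * ((y - a) ^ 2 + a * (1 + a) * y) / (a * (1 + y) ^ 2) := by positivity
    linarith
  have e3 : D * (T₀ * (y + a - 1) / 2) ≤ D * (T₁ + (a + 1 / 2) * T₀ - β * x * T₀ / 2) := by
    apply mul_le_mul_of_nonneg_left _ hD0.le
    rw [hy]
    nlinarith
  have e4 := mul_le_mul_of_nonneg_right e2 (show 0 ≤ β * T₀ / 2 by positivity)
  have e5 := mul_le_mul_of_nonneg_left e3 hβ.le
  linarith

/-- The integral is at most the barrier; the comparison is made on `(0, x)` and uses that the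
barrier vanishes at `0`. -/
lemma integral_le_barrier {ν β : ℝ} (hν : -1 / 2 < ν) (hβ1 : 0 < β) (hβ2 : β < 1) {x : ℝ}
    (hx : 0 < x)
    (hint : IntervalIntegrable (fun u => Real.exp (-β * u) * u ^ ν * struveL ν u) volume 0 x) :
    ∫ u in (0:ℝ)..x, Real.exp (-β * u) * u ^ ν * struveL ν u ≤
      (2 * ν + 3) / (2 * ν + 2) * (1 + β * ((1 + 1 / (ν + 1 / 2)) * x / (1 + (1 - β) * x))) *
        (Real.exp (-β * x) * x ^ ν * struveL (ν + 1) x) := by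
  set c : ℝ := (1 / 2) ^ (ν + 1) with hc
  have hc0 : 0 < c := Real.rpow_pos_of_pos (by norm_num) _
  set M : ℝ := 1 + 1 / (ν + 1 / 2) with hM
  set B : ℝ → ℝ := fun y => (2 * ν + 3) / (2 * ν + 2) * (c / 2) *
    (struveG ν β y * (1 + β * (M * y / (1 + (1 - β) * y)))) with hB
  have hcont : ContinuousOn B (Set.Icc 0 x) := by
    have c0 := continuousOn_struveSeries hν 0 x
    have c2 : ContinuousOn (fun y : ℝ => y ^ (2 * ν + 2)) (Set.Icc 0 x) :=
      (Real.continuous_rpow_const (by linarith)).continuousOn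
    have c3 : ContinuousOn (fun y : ℝ => M * y / (1 + (1 - β) * y)) (Set.Icc 0 x) := by
      refine ContinuousOn.div (by fun_prop) (by fun_prop) fun y hy => ?_
      have : 0 ≤ (1 - β) * y := mul_nonneg (by linarith) hy.1
      linarith
    simp only [hB, struveG]
    fun_prop
  have key := intervalIntegral.integral_le_sub_of_hasDeriv_right_of_le hx.le hcont
    (g' := fun y => (2 * ν + 3) / (2 * ν + 2) * (c / 2) *
      ((Real.exp (-β * y) * (-β) * (y ^ (2 * ν + 2) * struveSeries ν 0 y) + Real.exp (-β * y) *
        ((2 * ν + 2) * y ^ (2 * ν + 2 - 1) * struveSeries ν 0 y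
          + y ^ (2 * ν + 2) * (2 / y * struveSeries ν 1 y))) *
        (1 + β * (M * y / (1 + (1 - β) * y)))
      + struveG ν β y * (β * (M / (1 + (1 - β) * y) ^ 2))))
    (φ := fun u => Real.exp (-β * u) * u ^ ν * struveL ν u) ?_
    ((intervalIntegrable_iff_integrableOn_Icc_of_le hx.le).mp hint) ?_
  · have z : B 0 = 0 := by
      simp [hB, struveG, Real.zero_rpow (show 2 * ν + 2 ≠ 0 by linarith)]
    rw [z, sub_zero] at key
    refine key.trans_eq ?_
    have e : x ^ ν * struveL (ν + 1) x = c / 2 * (x ^ (2 * ν + 2) * struveSeries ν 0 x) := by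
      have h1 := rpow_split (ν := ν) hx
      rw [struveL_succ_eq hx, show ν + 2 = (ν + 1) + 1 by ring,
        Real.rpow_add_one (by positivity) (ν + 1),
        show 2 * ν + 2 = (2 * ν + 1) + 1 by ring, Real.rpow_add_one hx.ne']
      linear_combination (x / 2 * struveSeries ν 0 x) * h1
    simp only [hB, struveG]
    linear_combination (-(2 * ν + 3) / (2 * ν + 2) *
      (1 + β * (M * x / (1 + (1 - β) * x))) * Real.exp (-β * x)) * e
  · intro y hy
    have hy0 : 0 < y := hy.1
    have hden : 1 + (1 - β) * y ≠ 0 := by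
      have : 0 < (1 - β) * y := mul_pos (by linarith) hy0
      linarith
    have de : HasDerivAt (fun y : ℝ => Real.exp (-β * y)) (Real.exp (-β * y) * (-β)) y := by
      simpa using ((hasDerivAt_id y).const_mul (-β)).exp
    have dr : HasDerivAt (fun y : ℝ => y ^ (2 * ν + 2))
        ((2 * ν + 2) * y ^ (2 * ν + 2 - 1)) y :=
      Real.hasDerivAt_rpow_const (Or.inl hy0.ne')
    have dD : HasDerivAt (fun y : ℝ => 1 + β * (M * y / (1 + (1 - β) * y)))
        (β * (M / (1 + (1 - β) * y) ^ 2)) y := by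
      have n1 : HasDerivAt (fun y : ℝ => M * y) M y := by
        simpa using (hasDerivAt_id y).const_mul M
      have n2 : HasDerivAt (fun y : ℝ => 1 + (1 - β) * y) (1 - β) y := by
        simpa using ((hasDerivAt_id y).const_mul (1 - β)).const_add 1
      refine (((n1.div n2 hden).const_mul β).const_add 1).congr_deriv ?_
      field_simp
      ring
    exact (((de.mul (dr.mul (hasDerivAt_struveSeries hν 0 hy0))).mul dD).const_mul
      _).hasDerivWithinAt
  · intro y hy
    have hy0 : 0 < y := hy.1
    have hb := barrier_ineq (a := ν + 1 / 2) (β := β) (by linarith) hβ1 hβ2 hy0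
      (struveSeries_zero_pos hν hy0) (struveSeries_nonneg hν 1 y)
      (by have := struve_ratio hν hy0; linarith)
    rw [← hM] at hb
    have hp : 0 < y ^ (2 * ν + 1) := Real.rpow_pos_of_pos hy0 _
    have hE : 0 < (2 * ν + 3) / (2 * ν + 2) * c * Real.exp (-β * y) * y ^ (2 * ν + 1) := by
      have : 0 < (2 * ν + 3) / (2 * ν + 2) := div_pos (by linarith) (by linarith)
      have := Real.exp_pos (-β * y)
      positivity
    have h := mul_le_mul_of_nonneg_left hb hE.le
    have n2 : 2 * ν + 2 ≠ 0 := by linarith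
    have n3 : 2 * ν + 3 ≠ 0 := by linarith
    have el : Real.exp (-β * y) * y ^ ν * struveL ν y =
        (2 * ν + 3) / (2 * ν + 2) * c * Real.exp (-β * y) * y ^ (2 * ν + 1) *
        ((struveSeries ν 1 y + (ν + 1 / 2 + 1) * struveSeries ν 0 y) *
          ((2 * (ν + 1 / 2) + 1) / (2 * (ν + 1 / 2) + 2))) := by
      have h1 := rpow_split (ν := ν) hy0
      rw [struveL_eq hν hy0, show 2 * (ν + 1 / 2) + 1 = 2 * ν + 2 by ring,
        show 2 * (ν + 1 / 2) + 2 = 2 * ν + 3 by ring]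
      have hA : (2 * ν + 3) / (2 * ν + 2) * ((2 * ν + 2) / (2 * ν + 3)) = 1 := by
        rw [div_mul_div_cancel₀ n2, div_self n3]
      linear_combination
        (Real.exp (-β * y) * (struveSeries ν 1 y + (ν + 3 / 2) * struveSeries ν 0 y)) * h1
          - (c * Real.exp (-β * y) * y ^ (2 * ν + 1) *
            (struveSeries ν 1 y + (ν + 3 / 2) * struveSeries ν 0 y)) * hA
    change Real.exp (-β * y) * y ^ ν * struveL ν y ≤ _
    rw [el]
    refine h.trans_eq ?_
    rw [struveG, show 2 * ν + 2 - 1 = 2 * ν + 1 by ring,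
      show y ^ (2 * ν + 2) = y ^ (2 * ν + 1) * y by
        rw [← Real.rpow_add_one hy0.ne']; ring_nf]
    generalize β * (M * y / (1 + (1 - β) * y)) = D
    generalize M / (1 + (1 - β) * y) ^ 2 = D'
    generalize (2 * ν + 3) / (2 * ν + 2) = A
    field_simp
    ring

theorem stmt11 (ν β : ℝ) (hν : ν > -1/2) (hβ1 : 0 < β) (hβ2 : β < 1) :
    ∀ x : ℝ, 0 < x →
      ∫ u in (0:ℝ)..x, Real.exp (-β * u) * u ^ ν * struveL ν u <
        (2 * ν + 3 + Real.sqrt (2 * (2 * ν + 3))) / ((2 * ν + 1) * (1 - β)) *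
          (Real.exp (-β * x) * x ^ ν * struveL (ν + 1) x) := by
  intro x hx
  have hν' : -1 / 2 < ν := hν
  have hG : 0 < Real.exp (-β * x) * x ^ ν * struveL (ν + 1) x := by
    rw [struveL_succ_eq hx]
    have := struveSeries_zero_pos hν' hx
    positivity
  have ha : 0 < 2 * ν + 1 := by linarith
  have hs : 0 < 1 - β := by linarith
  have hsq : 2 < Real.sqrt (2 * (2 * ν + 3)) := by
    apply Real.lt_sqrt_of_sq_lt
    linarith
  by_cases hint : IntervalIntegrable
      (fun u => Real.exp (-β * u) * u ^ ν * struveL ν u) volume 0 x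
  · refine (integral_le_barrier hν' hβ1 hβ2 hx hint).trans_lt (mul_lt_mul_of_pos_right ?_ hG)
    have hM : 1 + 1 / (ν + 1 / 2) = (2 * ν + 3) / (2 * ν + 1) := by
      rw [eq_div_iff ha.ne', show ν + 1 / 2 = (2 * ν + 1) / 2 by ring, one_div_div, add_mul,
        div_mul_cancel₀ _ ha.ne']
      ring
    rw [hM]
    have hy : 0 < (1 - β) * x := mul_pos hs hx
    have h1 : 1 + β * ((2 * ν + 3) / (2 * ν + 1) * x / (1 + (1 - β) * x)) ≤
        (2 * ν + 3) / ((2 * ν + 1) * (1 - β)) := by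
      have hle : (2 * ν + 3) / (2 * ν + 1) * x / (1 + (1 - β) * x) ≤
          (2 * ν + 3) / ((2 * ν + 1) * (1 - β)) := by
        rw [div_mul_eq_mul_div, div_div, div_le_div_iff₀ (by positivity) (by positivity)]
        have : 0 < (2 * ν + 3) * (2 * ν + 1) := mul_pos (by linarith) ha
        linarith
      have h2 : 1 ≤ (1 - β) * ((2 * ν + 3) / ((2 * ν + 1) * (1 - β))) := by
        rw [← mul_div_assoc, le_div_iff₀ (by positivity)]
        nlinarith
      have := mul_le_mul_of_nonneg_left hle hβ1.le
      linarith
    calc _ ≤ (2 * ν + 3) / (2 * ν + 2) * ((2 * ν + 3) / ((2 * ν + 1) * (1 - β))) :=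
          mul_le_mul_of_nonneg_left h1 (div_nonneg (by linarith) (by linarith))
      _ < (2 * ν + 5) / ((2 * ν + 1) * (1 - β)) := by
          rw [← mul_div_assoc]
          apply div_lt_div_of_pos_right _ (by positivity)
          rw [div_mul_eq_mul_div, div_lt_iff₀ (by linarith)]
          nlinarith
      _ < _ := by
          apply div_lt_div_of_pos_right _ (by positivity)
          linarith
  -- A non-integrable integrand would have integral `0`, below the positive right-hand side, so
  -- integrability need not be established.
  · rw [intervalIntegral.integral_undef hint]
    have : 0 < 2 * ν + 3 := by linarith
    positivity
end

section
/- Let ν > −1/2 and 0 < β < 1. Then for all x > 0, ∫_0^x e^{−βu} u^ν L_ν(u) du < ((2ν+3+2√2)/((2ν+1)(1−β))) · e^{−βx} x^ν L_{ν+1}(x). -/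
/-!
Put `a = ν + 1/2 > 0` and `γ = 1 - β`. Writing `L_μ(x) = x^μ N_μ(x)` with `N_μ` an entire odd power
series (`struveN`), the recurrences for Struve functions become `x N_{ν+1}' = N_ν - (2a+1) N_{ν+1}`
and `N_ν' ≥ x N_{ν+1}`. Two bounds on the ratio `L_{ν+1} / L_ν = x N_{ν+1} / N_ν` carry the proof:

* `(2a+2) N_{ν+1} ≤ N_ν`, by comparing coefficients (`struveN_succ_le`);
* `(x+a) N_{ν+1} ≤ N_ν`, because `e^x x^a (N_ν - (x+a) N_{ν+1})` vanishes at `0` and is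
  nondecreasing (`add_mul_struveN_le`).

Let `F(x) = e^{-βx} x^ν L_{ν+1}(x) = e^{-βx} x^{2a} N_{ν+1}(x)` and let `φ` be the integrand, so that
`φ = e^{-βx} x^{2a-1} N_ν` and `F' = e^{-βx} x^{2a-1} (N_ν - (1+βx) N_{ν+1})`. The ratio bounds give

* `(2/a) ((x+a) F)' ≥ φ` for all `x > 0`;
* `((a+2)/(aγ)) F' ≥ φ` for `x ≥ x₁ := (2-a)/(2γ)`.

Up to `x₁` the first one yields `∫ φ ≤ (2/a) (x+a) F ≤ ((a+2)/(aγ)) F`, and beyond `x₁` the second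
one propagates this estimate. Since `2 < 1 + √2`, the constant `(a+2)/(aγ) = (2ν+5)/((2ν+1)(1-β))`
is strictly smaller than the required one.
-/

open Real MeasureTheory

/-! ### Power series of the modified Struve function -/

/-- Coefficient of `x ^ (2k+1)` in the power series of `x ^ (-μ) * L_μ(x)`. -/
noncomputable def struveC (μ : ℝ) (k : ℕ) : ℝ :=
  (1 / 2 : ℝ) ^ (μ + 2 * (k : ℝ) + 1) /
    (Real.Gamma ((k : ℝ) + 3 / 2) * Real.Gamma ((k : ℝ) + μ + 3 / 2))

/-- The entire function `x ^ (-μ) * L_μ(x)`, given by its power series. -/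
noncomputable def struveN (μ x : ℝ) : ℝ := ∑' k : ℕ, struveC μ k * x ^ (2 * k + 1)

lemma struveC_pos {μ : ℝ} (hμ : -1/2 < μ) (k : ℕ) : 0 < struveC μ k := by
  have hk : (0 : ℝ) ≤ k := k.cast_nonneg
  have h1 := Real.Gamma_pos_of_pos (show (0 : ℝ) < (k : ℝ) + 3 / 2 by linarith)
  have h2 := Real.Gamma_pos_of_pos (show (0 : ℝ) < (k : ℝ) + μ + 3 / 2 by linarith)
  unfold struveC
  positivity

lemma struveL_eq_s12 {μ x : ℝ} (hx : 0 < x) : struveL μ x = x ^ μ * struveN μ x := by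
  unfold struveL struveN
  rw [← tsum_mul_left]
  refine tsum_congr fun k => ?_
  unfold struveC
  have h : (x / 2) ^ (μ + 2 * (k : ℝ) + 1)
      = x ^ μ * x ^ (2 * k + 1) * (1 / 2 : ℝ) ^ (μ + 2 * (k : ℝ) + 1) := by
    rw [div_eq_mul_one_div, Real.mul_rpow hx.le (by norm_num), ← Real.rpow_natCast x (2 * k + 1),
      ← Real.rpow_add hx]
    push_cast
    ring_nf
  rw [h]
  ring

lemma struveC_add_one {μ : ℝ} (hμ : -1/2 < μ) (k : ℕ) :
    (2 * k + 2 * μ + 3) * struveC (μ + 1) k = struveC μ k := by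
  have hk : (0 : ℝ) ≤ k := k.cast_nonneg
  have h0 : (0 : ℝ) < (k : ℝ) + μ + 3 / 2 := by linarith
  have h1 := Real.Gamma_pos_of_pos (show (0 : ℝ) < (k : ℝ) + 3 / 2 by linarith)
  have h2 := Real.Gamma_pos_of_pos h0
  unfold struveC
  rw [show (k : ℝ) + (μ + 1) + 3 / 2 = ((k : ℝ) + μ + 3 / 2) + 1 by ring,
    Real.Gamma_add_one h0.ne',
    show μ + 1 + 2 * (k : ℝ) + 1 = (μ + 2 * (k : ℝ) + 1) + 1 by ring,
    Real.rpow_add_one (by norm_num),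
    show 2 * (k : ℝ) + 2 * μ + 3 = 2 * ((k : ℝ) + μ + 3 / 2) by ring]
  generalize (k : ℝ) + μ + 3 / 2 = z at *
  have := h0.ne'
  field_simp

lemma struveC_succ {μ : ℝ} (hμ : -1/2 < μ) (k : ℕ) :
    (2 * k + 3) * struveC μ (k + 1) = struveC (μ + 1) k := by
  have hk : (0 : ℝ) ≤ k := k.cast_nonneg
  have h0 : (0 : ℝ) < (k : ℝ) + 3 / 2 := by linarith
  have h1 := Real.Gamma_pos_of_pos h0
  have h2 := Real.Gamma_pos_of_pos (show (0 : ℝ) < (k : ℝ) + (μ + 1) + 3 / 2 by linarith)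
  unfold struveC
  push_cast
  rw [show (k : ℝ) + 1 + 3 / 2 = ((k : ℝ) + 3 / 2) + 1 by ring,
    Real.Gamma_add_one h0.ne',
    show (k : ℝ) + 1 + μ + 3 / 2 = (k : ℝ) + (μ + 1) + 3 / 2 by ring,
    show μ + 2 * ((k : ℝ) + 1) + 1 = (μ + 1 + 2 * (k : ℝ) + 1) + 1 by ring,
    Real.rpow_add_one (by norm_num)]
  field_simp

lemma struveC_le {μ : ℝ} (hμ : -1/2 < μ) (k : ℕ) :
    struveC μ k ≤ struveC μ 0 / (k.factorial : ℝ) := by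
  induction k with
  | zero => simp
  | succ k ih =>
    have hk : (0 : ℝ) ≤ k := k.cast_nonneg
    have e1 := struveC_succ hμ k
    have e2 := struveC_add_one hμ k
    have hp := struveC_pos hμ (k + 1)
    rw [← e1] at e2
    have hf : (0 : ℝ) < k.factorial := by exact_mod_cast k.factorial_pos
    rw [Nat.factorial_succ]
    push_cast
    rw [le_div_iff₀ (by positivity)]
    rw [le_div_iff₀ hf] at ih
    refine le_trans ?_ ih
    rw [← e2, ← mul_assoc, ← mul_assoc]
    have h3 : ((k : ℝ) + 1) ≤ (2 * k + 2 * μ + 3) * (2 * k + 3) := by nlinarith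
    have := mul_le_mul_of_nonneg_right h3 (mul_nonneg hp.le hf.le)
    nlinarith

/-- Common summable majorant for the series of `struveN` and of its derivative. -/
lemma struve_majorant_summable (μ R : ℝ) :
    Summable fun k : ℕ => struveC μ 0 * ((3 * R ^ 2) ^ k / (k.factorial : ℝ)) :=
  (Real.summable_pow_div_factorial _).mul_left _

lemma struve_term_bound {μ R x : ℝ} (hμ : -1/2 < μ) (hx : |x| ≤ R) (k : ℕ) :
    ‖(2 * k + 1) * struveC μ k * x ^ (2 * k)‖
      ≤ struveC μ 0 * ((3 * R ^ 2) ^ k / (k.factorial : ℝ)) := by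
  have hk : (0 : ℝ) ≤ k := k.cast_nonneg
  have hf : (0 : ℝ) < k.factorial := by exact_mod_cast k.factorial_pos
  have hp := struveC_pos hμ k
  have h3 : (2 * (k : ℝ) + 1) ≤ 3 ^ k := by
    have := one_add_mul_le_pow (show (-2 : ℝ) ≤ 2 by norm_num) k
    norm_num at this
    linarith
  have hxx : x ^ (2 * k) ≤ (R ^ 2) ^ k := by
    rw [pow_mul]
    exact pow_le_pow_left₀ (sq_nonneg x) (sq_le_sq' (abs_le.mp hx).1 (abs_le.mp hx).2) k
  have hx0 : 0 ≤ x ^ (2 * k) := by rw [pow_mul]; positivity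
  rw [Real.norm_of_nonneg (by positivity)]
  calc (2 * k + 1) * struveC μ k * x ^ (2 * k)
      ≤ 3 ^ k * (struveC μ 0 / k.factorial) * (R ^ 2) ^ k := by
        have := struveC_le hμ k
        have : 0 ≤ struveC μ 0 / k.factorial := hp.le.trans this
        gcongr
    _ = _ := by rw [mul_pow]; ring

lemma struve_deriv_summable {μ : ℝ} (hμ : -1/2 < μ) (x : ℝ) :
    Summable fun k : ℕ => (2 * k + 1) * struveC μ k * x ^ (2 * k) :=
  Summable.of_norm_bounded (struve_majorant_summable μ |x|) fun k =>
    struve_term_bound hμ le_rfl k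

lemma struveN_summable {μ : ℝ} (hμ : -1/2 < μ) (x : ℝ) :
    Summable fun k : ℕ => struveC μ k * x ^ (2 * k + 1) := by
  refine Summable.of_norm_bounded ((struve_deriv_summable hμ x).norm.mul_left |x|) fun k => ?_
  have hp := struveC_pos hμ k
  have hk : (0 : ℝ) ≤ k := k.cast_nonneg
  rw [norm_mul, norm_mul, norm_mul, pow_succ, norm_mul, Real.norm_of_nonneg hp.le,
    Real.norm_of_nonneg (by positivity : (0 : ℝ) ≤ 2 * k + 1), ← Real.norm_eq_abs]
  have : 0 ≤ ‖x‖ * (struveC μ k * ‖x ^ (2 * k)‖) := by positivity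
  nlinarith

lemma struveN_hasDerivAt {μ : ℝ} (hμ : -1/2 < μ) (x : ℝ) :
    HasDerivAt (struveN μ) (∑' k : ℕ, (2 * k + 1) * struveC μ k * x ^ (2 * k)) x := by
  have hx : x ∈ Metric.ball (0 : ℝ) (|x| + 1) := by simp
  exact hasDerivAt_tsum_of_isPreconnected
    (g := fun (k : ℕ) (y : ℝ) => struveC μ k * y ^ (2 * k + 1))
    (g' := fun (k : ℕ) (y : ℝ) => (2 * k + 1) * struveC μ k * y ^ (2 * k))
    (struve_majorant_summable μ (|x| + 1))
    Metric.isOpen_ball (convex_ball (0 : ℝ) (|x| + 1)).isPreconnected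
    (fun k y _ => ((hasDerivAt_pow (2 * k + 1) y).const_mul (struveC μ k)).congr_deriv (by
      rw [Nat.add_sub_cancel]
      push_cast
      ring))
    (fun k y hy => struve_term_bound hμ (by simpa using (Metric.mem_ball.mp hy).le) k) hx
    (struveN_summable hμ x) hx

/-! ### Recurrences and bounds for the ratio of consecutive orders -/

/-- The recurrence `(x^{ν+1} L_{ν+1})' = x^{ν+1} L_ν`, written for `struveN`. -/
lemma struveN_recurrence {ν : ℝ} (hν : -1/2 < ν) (x : ℝ) :
    x * deriv (struveN (ν + 1)) x = struveN ν x - (2 * ν + 2) * struveN (ν + 1) x := by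
  have h1 : -1/2 < ν + 1 := by linarith
  rw [(struveN_hasDerivAt h1 x).deriv, eq_sub_iff_add_eq]
  unfold struveN
  rw [← tsum_mul_left, ← tsum_mul_left,
    ← Summable.tsum_add ((struve_deriv_summable h1 x).mul_left x)
      ((struveN_summable h1 x).mul_left _)]
  refine tsum_congr fun k => ?_
  rw [← struveC_add_one hν k]
  ring

/-- A one-sided form of `(x^{-ν} L_ν)' = x^{-ν} L_{ν+1} + const`: the constant, which is the
zeroth term of the differentiated series, is positive. -/
lemma mul_struveN_le_deriv {ν : ℝ} (hν : -1/2 < ν) (x : ℝ) :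
    x * struveN (ν + 1) x ≤ deriv (struveN ν) x := by
  have hs := struve_deriv_summable hν x
  rw [(struveN_hasDerivAt hν x).deriv, hs.tsum_eq_zero_add]
  have : ∑' k : ℕ, (2 * ((k + 1 : ℕ) : ℝ) + 1) * struveC ν (k + 1) * x ^ (2 * (k + 1))
      = x * struveN (ν + 1) x := by
    unfold struveN
    rw [← tsum_mul_left]
    refine tsum_congr fun k => ?_
    rw [← struveC_succ hν k]
    push_cast
    ring
  rw [this]
  have := struveC_pos hν 0
  simp
  linarith

lemma struveN_pos {μ x : ℝ} (hμ : -1/2 < μ) (hx : 0 < x) : 0 < struveN μ x :=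
  (struveN_summable hμ x).tsum_pos
    (fun k => by have := struveC_pos hμ k; positivity) 0
    (by have := struveC_pos hμ 0; positivity)

lemma struveN_succ_le {ν x : ℝ} (hν : -1/2 < ν) (hx : 0 < x) :
    (2 * ν + 3) * struveN (ν + 1) x ≤ struveN ν x := by
  have h1 : -1/2 < ν + 1 := by linarith
  unfold struveN
  rw [← tsum_mul_left]
  refine Summable.tsum_le_tsum (fun k => ?_) ((struveN_summable h1 x).mul_left _)
    (struveN_summable hν x)
  rw [← struveC_add_one hν k]
  have := struveC_pos h1 k
  have h : 0 ≤ (k : ℝ) * (struveC (ν + 1) k * x ^ (2 * k + 1)) := by positivity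
  nlinarith

/-- Equivalent to `L_{ν+1}(x) / L_ν(x) ≤ x / (x + ν + 1/2)`. -/
lemma add_mul_struveN_le {ν x : ℝ} (hν : -1/2 < ν) (hx : 0 < x) :
    (x + (ν + 1 / 2)) * struveN (ν + 1) x ≤ struveN ν x := by
  have h1 : -1/2 < ν + 1 := by linarith
  obtain ⟨a, ha⟩ : ∃ a, a = ν + 1 / 2 := ⟨_, rfl⟩
  have ha0 : 0 < a := by linarith
  rw [← ha]
  have hd0 : ∀ y, HasDerivAt (struveN ν) (deriv (struveN ν) y) y := fun y =>
    (struveN_hasDerivAt hν y).differentiableAt.hasDerivAt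
  have hd1 : ∀ y, HasDerivAt (struveN (ν + 1)) (deriv (struveN (ν + 1)) y) y := fun y =>
    (struveN_hasDerivAt h1 y).differentiableAt.hasDerivAt
  have hc0 : Continuous (struveN ν) :=
    continuous_iff_continuousAt.mpr fun y => (hd0 y).continuousAt
  have hc1 : Continuous (struveN (ν + 1)) :=
    continuous_iff_continuousAt.mpr fun y => (hd1 y).continuousAt
  let Ψ : ℝ → ℝ := fun y =>
    Real.exp y * y ^ a * (struveN ν y - (y + a) * struveN (ν + 1) y)
  have hΨ : MonotoneOn Ψ (Set.Ici 0) := by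
    have hder : ∀ y, 0 < y → HasDerivAt Ψ
        ((Real.exp y * y ^ a + Real.exp y * (a * y ^ (a - 1))) *
            (struveN ν y - (y + a) * struveN (ν + 1) y) +
          Real.exp y * y ^ a * (deriv (struveN ν) y -
            (1 * struveN (ν + 1) y + (y + a) * deriv (struveN (ν + 1)) y))) y := fun y hy =>
      ((Real.hasDerivAt_exp y).mul (Real.hasDerivAt_rpow_const (Or.inl hy.ne'))).mul
        ((hd0 y).sub (((hasDerivAt_id y).add_const a).mul (hd1 y)))
    refine monotoneOn_of_deriv_nonneg (convex_Ici 0) ?_ ?_ ?_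
    · have : Continuous Ψ :=
        (Real.continuous_exp.mul (Real.continuous_rpow_const ha0.le)).mul
          (hc0.sub ((continuous_id.add continuous_const).mul hc1))
      exact this.continuousOn
    · intro y hy
      rw [interior_Ici] at hy
      exact (hder y hy).differentiableAt.differentiableWithinAt
    · intro y hy
      rw [interior_Ici] at hy
      have hy : 0 < y := hy
      rw [(hder y hy).deriv]
      have e1 := struveN_recurrence hν y
      have e2 := mul_struveN_le_deriv hν y
      have hp := struveN_pos h1 hy
      have hpow : y ^ a = y ^ (a - 1) * y := by
        rw [← Real.rpow_add_one hy.ne', sub_add_cancel]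
      have hν2 : ν = a - 1 / 2 := by linarith
      generalize deriv (struveN ν) y = d0 at *
      generalize deriv (struveN (ν + 1)) y = d1 at *
      generalize struveN (ν + 1) y = n1 at *
      generalize struveN ν y = n0 at *
      have hE : 0 < Real.exp y * y ^ (a - 1) := by positivity
      rw [hpow]
      have key : 0 ≤ (y + a) * (n0 - (y + a) * n1) + y * (d0 - n1) - (y + a) * (y * d1) := by
        rw [e1, hν2]
        have : 0 ≤ (a ^ 2 + a) * n1 := by positivity
        nlinarith [mul_le_mul_of_nonneg_left e2 hy.le]
      have := mul_nonneg hE.le key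
      linarith
  have h0 : Ψ 0 = 0 := by simp [Ψ, Real.zero_rpow ha0.ne']
  have := hΨ (Set.self_mem_Ici) (Set.mem_Ici.mpr hx.le) hx.le
  rw [h0] at this
  have hE : 0 < Real.exp x * x ^ a := by positivity
  have := nonneg_of_mul_nonneg_right this hE
  linarith

/-! ### The integral estimate -/

/-- `e^{-βx} x^{2ν+1} N_{ν+1}(x)`, which equals `e^{-βx} x^ν L_{ν+1}(x)` for `x > 0`. -/
noncomputable def struveF (ν β x : ℝ) : ℝ :=
  Real.exp (-β * x) * x ^ (2 * ν + 1) * struveN (ν + 1) x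

lemma struveF_pos {ν β x : ℝ} (hν : -1/2 < ν) (hx : 0 < x) : 0 < struveF ν β x := by
  have := struveN_pos (show -1/2 < ν + 1 by linarith) hx
  unfold struveF
  positivity

lemma struveF_eq {ν β x : ℝ} (hx : 0 < x) :
    Real.exp (-β * x) * x ^ ν * struveL (ν + 1) x = struveF ν β x := by
  rw [struveL_eq_s12 hx, struveF, show 2 * ν + 1 = ν + (ν + 1) by ring,
    Real.rpow_add hx ν (ν + 1)]
  ring

lemma struve_integrand_eq {ν β x : ℝ} (hx : 0 < x) :
    Real.exp (-β * x) * x ^ ν * struveL ν x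
      = Real.exp (-β * x) * x ^ (2 * ν) * struveN ν x := by
  rw [struveL_eq_s12 hx, two_mul, Real.rpow_add hx ν]
  ring

lemma struveF_continuous {ν : ℝ} (β : ℝ) (hν : -1/2 < ν) : Continuous (struveF ν β) := by
  have hc1 : Continuous (struveN (ν + 1)) := continuous_iff_continuousAt.mpr fun y =>
    (struveN_hasDerivAt (show -1/2 < ν + 1 by linarith) y).continuousAt
  unfold struveF
  exact ((by fun_prop : Continuous fun x : ℝ => Real.exp (-β * x)).mul
    (Real.continuous_rpow_const (by linarith))).mul hc1

lemma struveF_hasDerivAt {ν β x : ℝ} (hν : -1/2 < ν) (hx : 0 < x) :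
    HasDerivAt (struveF ν β) (Real.exp (-β * x) * x ^ (2 * ν) *
      (struveN ν x - (1 + β * x) * struveN (ν + 1) x)) x := by
  have h1 : -1/2 < ν + 1 := by linarith
  have hd := (struveN_hasDerivAt h1 x).differentiableAt.hasDerivAt
  have he : HasDerivAt (fun x : ℝ => Real.exp (-β * x)) (Real.exp (-β * x) * (-β * 1)) x :=
    ((hasDerivAt_id x).const_mul (-β)).exp
  have hr : HasDerivAt (fun x : ℝ => x ^ (2 * ν + 1))
      ((2 * ν + 1) * x ^ (2 * ν + 1 - 1)) x := Real.hasDerivAt_rpow_const (Or.inl hx.ne')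
  refine ((he.mul hr).mul hd).congr_deriv ?_
  have e1 := struveN_recurrence hν x
  rw [show struveN ν x = x * deriv (struveN (ν + 1)) x + (2 * ν + 2) * struveN (ν + 1) x by
    linarith, add_sub_cancel_right]
  simp only [Pi.mul_apply]
  rw [Real.rpow_add_one hx.ne']
  ring

lemma integral_bound_of_deriv {φ G g : ℝ → ℝ} {p q : ℝ} (hpq : p ≤ q)
    (hG : Continuous G) (hint : IntervalIntegrable φ volume p q)
    (hd : ∀ y, p < y → HasDerivAt G (g y) y) (hle : ∀ y, p < y → φ y ≤ g y) :
    ∫ y in p..q, φ y ≤ G q - G p :=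
  intervalIntegral.integral_le_sub_of_hasDeriv_right_of_le hpq hG.continuousOn
    (fun y hy => (hd y hy.1).hasDerivWithinAt)
    ((intervalIntegrable_iff_integrableOn_Icc_of_le hpq).mp hint)
    (fun y hy => hle y hy.1)

/-- The estimate with the smaller constant `(2ν+5)/((2ν+1)(1-β)) = (a+2)/(a(1-β))`,
where `a = ν + 1/2`. -/
lemma struve_integral_le {ν β x : ℝ} (hν : -1/2 < ν) (hβ1 : 0 < β) (hβ2 : β < 1) (hx : 0 < x)
    (hint : IntervalIntegrable (fun u => Real.exp (-β * u) * u ^ ν * struveL ν u) volume 0 x) :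
    ∫ u in (0:ℝ)..x, Real.exp (-β * u) * u ^ ν * struveL ν u ≤
      (2 * ν + 5) / ((2 * ν + 1) * (1 - β)) * struveF ν β x := by
  have h1 : -1/2 < ν + 1 := by linarith
  obtain ⟨a, ha⟩ : ∃ a, a = ν + 1 / 2 := ⟨_, rfl⟩
  have ha0 : 0 < a := by linarith
  have hγ : 0 < 1 - β := by linarith
  have hC : (2 * ν + 5) / ((2 * ν + 1) * (1 - β)) = (a + 2) / (a * (1 - β)) := by
    rw [show 2 * ν + 5 = 2 * (a + 2) by linarith, show 2 * ν + 1 = 2 * a by linarith]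
    field_simp
  rw [hC]
  set φ : ℝ → ℝ := fun u => Real.exp (-β * u) * u ^ ν * struveL ν u with hφ
  have hF0 : struveF ν β 0 = 0 := by
    simp [struveF, Real.zero_rpow (show 2 * ν + 1 ≠ 0 by linarith)]
  have hFc := struveF_continuous β hν
  have sub : ∀ p q, 0 ≤ p → p ≤ q → q ≤ x → IntervalIntegrable φ volume p q :=
    fun p q hp hpq hq => hint.mono_set (by
      rw [Set.uIcc_of_le hpq, Set.uIcc_of_le hx.le]
      exact Set.Icc_subset_Icc hp hq)
  have step1 : ∀ q, 0 ≤ q → q ≤ x →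
      ∫ u in (0:ℝ)..q, φ u ≤ 2 / a * ((q + a) * struveF ν β q) := by
    intro q hq hqx
    have := integral_bound_of_deriv (φ := φ)
      (G := fun y => 2 / a * ((y + a) * struveF ν β y))
      (g := fun y => 2 / a * (1 * struveF ν β y + (y + a) * (Real.exp (-β * y) * y ^ (2 * ν) *
        (struveN ν y - (1 + β * y) * struveN (ν + 1) y))))
      hq (by fun_prop) (sub 0 q le_rfl hq hqx)
      (fun y hy => (((hasDerivAt_id y).add_const a).mul
        (struveF_hasDerivAt hν hy)).const_mul (2 / a)) ?_
    · simpa [hF0] using this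
    · intro y hy
      have e1 := struveN_succ_le hν hy
      have e2 := add_mul_struveN_le hν hy
      have hp1 := struveN_pos h1 hy
      have hE : 0 < Real.exp (-β * y) * y ^ (2 * ν) := by positivity
      simp only [hφ, struve_integrand_eq hy, struveF]
      rw [Real.rpow_add_one hy.ne']
      rw [← ha] at e2
      rw [show 2 * ν + 3 = 2 * a + 2 by linarith] at e1
      generalize struveN (ν + 1) y = n1 at *
      generalize struveN ν y = n0 at *
      -- `k1` is the case `β = 1` of `k2`, and the right-hand side of `k2` decreases with `β`.
      have k1 : (y ^ 2 + a * y + a) * n1 ≤ (y + a / 2) * n0 := by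
        rcases le_total y 2 with h2 | h2
        · have h3 := mul_le_mul_of_nonneg_left e1 (show 0 ≤ y + a / 2 by positivity)
          have h4 : 0 ≤ (a * y + y * (2 - y) + a ^ 2) * n1 := by
            have : 0 ≤ y * (2 - y) := mul_nonneg hy.le (by linarith)
            positivity
          nlinarith
        · have h3 := mul_le_mul_of_nonneg_left e2 (show 0 ≤ y + a / 2 by positivity)
          have h4 : 0 ≤ (a * (y - 2) + a ^ 2) * n1 := by
            have : 0 ≤ a * (y - 2) := mul_nonneg ha0.le (by linarith)
            positivity
          nlinarith
      have k2 : a / 2 * n0 ≤ y * n1 + (y + a) * (n0 - (1 + β * y) * n1) := by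
        have : 0 ≤ (1 - β) * ((y + a) * y * n1) := by positivity
        nlinarith
      have k3 : n0 ≤ 2 / a * (y * n1 + (y + a) * (n0 - (1 + β * y) * n1)) := by
        have := mul_le_mul_of_nonneg_left k2 (show 0 ≤ 2 / a by positivity)
        rwa [show 2 / a * (a / 2 * n0) = n0 by field_simp] at this
      have := mul_le_mul_of_nonneg_left k3 hE.le
      linarith
  have small : ∀ q, 0 < q → q ≤ x → 2 * (1 - β) * q ≤ 2 - a →
      ∫ u in (0:ℝ)..q, φ u ≤ (a + 2) / (a * (1 - β)) * struveF ν β q := by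
    intro q hq hqx hq1
    refine (step1 q hq.le hqx).trans ?_
    rw [← mul_assoc]
    refine mul_le_mul_of_nonneg_right ?_ (struveF_pos hν hq).le
    rw [div_mul_eq_mul_div, div_le_div_iff₀ ha0 (by positivity)]
    have : 0 ≤ a * (a * β) := by positivity
    nlinarith [mul_le_mul_of_nonneg_left hq1 ha0.le]
  have large : ∀ p, 0 ≤ p → p ≤ x → 2 - a ≤ 2 * (1 - β) * p →
      ∫ u in p..x, φ u ≤
        (a + 2) / (a * (1 - β)) * struveF ν β x - (a + 2) / (a * (1 - β)) * struveF ν β p := by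
    intro p hp hpx hp1
    refine integral_bound_of_deriv
      (G := fun y => (a + 2) / (a * (1 - β)) * struveF ν β y) hpx (by fun_prop)
      (sub p x hp hpx le_rfl)
      (fun y hy => (struveF_hasDerivAt hν (hp.trans_lt hy)).const_mul _) ?_
    intro y hpy
    have hy : 0 < y := hp.trans_lt hpy
    have e2 := add_mul_struveN_le hν hy
    have hp1' := struveN_pos h1 hy
    have hE : 0 < Real.exp (-β * y) * y ^ (2 * ν) := by positivity
    simp only [hφ, struve_integrand_eq hy]
    rw [← ha] at e2
    generalize struveN (ν + 1) y = n1 at *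
    generalize struveN ν y = n0 at *
    have hy1 : 2 - a ≤ 2 * (1 - β) * y := hp1.trans (by gcongr)
    have k1 : a * (1 - β) * n0 ≤ (a + 2) * (n0 - (1 + β * y) * n1) := by
      have h3 := mul_le_mul_of_nonneg_left e2
        (show 0 ≤ a + 2 - a * (1 - β) by nlinarith)
      have h4 : 0 ≤ (a + 2 - a * (1 - β)) * (y + a) - (a + 2) * (1 + β * y) := by
        nlinarith [mul_pos (mul_pos ha0 ha0) hβ1]
      nlinarith [mul_nonneg h4 hp1'.le]
    have k3 : n0 ≤ (a + 2) / (a * (1 - β)) * (n0 - (1 + β * y) * n1) := by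
      rw [div_mul_eq_mul_div, le_div_iff₀ (by positivity)]
      linarith
    have := mul_le_mul_of_nonneg_left k3 hE.le
    linarith
  rcases le_total (2 * (1 - β) * x) (2 - a) with hxs | hxl
  · exact small x hx le_rfl hxs
  · rcases le_or_gt (2 - a) 0 with h2 | h2
    · have := large 0 le_rfl hx.le (by linarith)
      simpa [hF0] using this
    · -- Split the integral at `x₁ = (2 - a) / (2 (1 - β))`.
      obtain ⟨p, hp⟩ : ∃ p, p = (2 - a) / (2 * (1 - β)) := ⟨_, rfl⟩
      have hp0 : 0 < p := by rw [hp]; positivity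
      have hpe : 2 * (1 - β) * p = 2 - a := by rw [hp]; field_simp
      have hpx : p ≤ x := by
        rw [hp, div_le_iff₀ (by positivity)]
        linarith
      have s1 := small p hp0 hpx hpe.le
      have s2 := large p hp0.le hpx hpe.ge
      rw [← intervalIntegral.integral_add_adjacent_intervals
        (sub 0 p le_rfl hp0.le hpx) (sub p x hp0.le hpx le_rfl)]
      linarith

theorem stmt12 (ν β : ℝ) (hν : ν > -1/2) (hβ1 : 0 < β) (hβ2 : β < 1) :
    ∀ x : ℝ, 0 < x →
      ∫ u in (0:ℝ)..x, Real.exp (-β * u) * u ^ ν * struveL ν u <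
        (2 * ν + 3 + 2 * Real.sqrt 2) / ((2 * ν + 1) * (1 - β)) *
          (Real.exp (-β * x) * x ^ ν * struveL (ν + 1) x) := by
  intro x hx
  rw [struveF_eq hx]
  have hF := struveF_pos (β := β) hν hx
  have hd : 0 < (2 * ν + 1) * (1 - β) := mul_pos (by linarith) (by linarith)
  have hs : 1 < Real.sqrt 2 := Real.lt_sqrt_of_sq_lt (by norm_num)
  by_cases hint : IntervalIntegrable
      (fun u => Real.exp (-β * u) * u ^ ν * struveL ν u) volume 0 x
  · refine (struve_integral_le hν hβ1 hβ2 hx hint).trans_lt ?_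
    refine mul_lt_mul_of_pos_right ?_ hF
    exact div_lt_div_of_pos_right (by linarith) hd
  · -- Without integrability the integral would take the junk value `0`, which is smaller as well;
    -- this makes a separate proof of integrability at `0` unnecessary.
    rw [intervalIntegral.integral_undef hint]
    exact mul_pos (div_pos (by linarith) hd) hF
end

section
/- Let ν > 1/2 and 0 < β < 1. Then for all x > 0, ∫_0^x e^{−βu} u^ν L_ν(u) du > (1/(1−β)) · ( (1 − 2ν(2ν+1+2√2)/((2ν−1)(1−β)x)) · e^{−βx} x^ν L_ν(x) − γ(2ν+1, βx)/(√π · 2^ν · β^{2ν+1} · Γ(ν+3/2)) ). -/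
open Real MeasureTheory

namespace StruveAux

/-! ### Even power series with infinite radius of convergence -/

/-- The even power series `∑ a_k u ^ (2k)`. -/
noncomputable def T (a : ℕ → ℝ) (u : ℝ) : ℝ := ∑' k : ℕ, a k * u ^ (2 * k)

/-- The power series with coefficients `a` has infinite radius of convergence. -/
def Adm (a : ℕ → ℝ) : Prop := ∀ R : ℝ, Summable fun k => a k * R ^ k

lemma Adm.summable {a : ℕ → ℝ} (h : Adm a) (u : ℝ) : Summable fun k => a k * u ^ (2 * k) := by
  simpa [pow_mul] using h (u ^ 2)

/-- Infinite radius of convergence survives a linear factor, since `k ≤ 2 ^ k` is absorbed by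
replacing `R` with `2R`. -/
lemma Adm.lin {a : ℕ → ℝ} (h : Adm a) (p : ℝ) : Adm fun k => (p + 2 * k) * a k := by
  intro R
  have h1 : Summable fun k => (2 : ℝ) * |a k * (2 * R) ^ k| := (h (2 * R)).abs.mul_left 2
  have h2 : Summable fun k : ℕ => 2 * (k : ℝ) * (a k * R ^ k) := by
    refine Summable.of_norm_bounded h1 fun k => ?_
    have hk : (k : ℝ) ≤ 2 ^ k := by exact_mod_cast (Nat.lt_two_pow_self).le
    rw [Real.norm_eq_abs, abs_mul, abs_of_nonneg (by positivity : (0 : ℝ) ≤ 2 * k), mul_pow,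
      abs_mul, abs_mul, abs_mul, abs_of_nonneg (by positivity : (0 : ℝ) ≤ 2 ^ k)]
    nlinarith [mul_le_mul_of_nonneg_right hk (by positivity : 0 ≤ |a k| * |R ^ k|)]
  refine (((h R).mul_left p).add h2).congr fun k => ?_
  ring

/-- Termwise differentiation, in the form `u T(a)'(u) = T(2k a_k)(u)`. -/
lemma hasDerivAt_T {a : ℕ → ℝ} (h : Adm a) {u : ℝ} (hu : 0 < u) :
    HasDerivAt (T a) (T (fun k => 2 * k * a k) u / u) u := by
  set R : ℝ := u + 1 with hR
  have hs := ((h.lin 0).summable R).abs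
  have key := hasDerivAt_tsum_of_isPreconnected (u := fun k : ℕ => |(0 + 2 * (k : ℝ)) * a k * R ^ (2 * k)|)
    (g := fun k y => a k * y ^ (2 * k))
    (g' := fun k y => a k * (((2 * k : ℕ) : ℝ) * y ^ (2 * k - 1))) (t := Set.Ioo 0 R) (y₀ := u) (y := u)
    hs isOpen_Ioo isPreconnected_Ioo
    (fun k y _ => (hasDerivAt_pow (2 * k) y).const_mul (a k))
    (fun k y hy => by
      have h1 : y ^ (2 * k - 1) ≤ R ^ (2 * k) := by
        calc y ^ (2 * k - 1) ≤ R ^ (2 * k - 1) := pow_le_pow_left₀ hy.1.le hy.2.le _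
          _ ≤ R ^ (2 * k) := pow_le_pow_right₀ (by linarith) (by omega)
      have h0 : 0 ≤ y ^ (2 * k - 1) := pow_nonneg hy.1.le _
      rw [Real.norm_eq_abs, abs_mul, abs_mul, abs_mul, abs_mul, abs_of_nonneg h0,
        abs_of_nonneg (h0.trans h1)]
      push_cast
      rw [zero_add, abs_of_nonneg (by positivity : (0 : ℝ) ≤ 2 * k)]
      nlinarith [mul_le_mul_of_nonneg_left h1 (by positivity : 0 ≤ |a k| * (2 * k))])
    ⟨hu, by linarith⟩ (h.summable u) ⟨hu, by linarith⟩
  have e : (∑' k : ℕ, a k * (((2 * k : ℕ) : ℝ) * u ^ (2 * k - 1))) = T (fun k => 2 * k * a k) u / u := by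
    rw [T, ← tsum_div_const]
    refine tsum_congr fun k => ?_
    rcases k with _ | k
    · simp
    · rw [show 2 * (k + 1) - 1 = 2 * k + 1 by omega, show 2 * (k + 1) = (2 * k + 1) + 1 by ring,
        pow_succ u (2 * k + 1)]
      push_cast
      field_simp
      ring
  rw [e] at key
  exact key

lemma continuous_T {a : ℕ → ℝ} (h : Adm a) : Continuous (T a) := by
  have : ∀ R : ℝ, ContinuousOn (T a) (Set.Ioo (-R) R) := fun R => by
    refine continuousOn_tsum (fun k => by fun_prop) ((h.summable R).abs) fun k y hy => ?_
    rw [Real.norm_eq_abs, abs_mul, abs_mul, pow_mul, pow_mul]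
    gcongr ?_ * ?_
    have : y ^ 2 ≤ R ^ 2 := sq_le_sq' hy.1.le hy.2.le
    rw [abs_of_nonneg (by positivity), abs_of_nonneg (by positivity)]
    gcongr
  refine continuous_iff_continuousAt.2 fun x => (this (|x| + 1)).continuousAt ?_
  exact Ioo_mem_nhds (by linarith [neg_abs_le x]) (by linarith [le_abs_self x])

lemma T_lin {a : ℕ → ℝ} (h : Adm a) (p u : ℝ) :
    T (fun k => (p + 2 * k) * a k) u = p * T a u + T (fun k => 2 * k * a k) u := by
  have h2 : Summable fun k : ℕ => 2 * (k : ℝ) * a k * u ^ (2 * k) := by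
    simpa using (h.lin 0).summable u
  rw [T, T, T, ← tsum_mul_left, ← ((h.summable u).mul_left p).tsum_add h2]
  exact tsum_congr fun k => by ring

lemma hasDerivAt_rpow_T {a : ℕ → ℝ} (h : Adm a) (p : ℝ) {u : ℝ} (hu : 0 < u) :
    HasDerivAt (fun u => u ^ p * T a u) (u ^ (p - 1) * T (fun k => (p + 2 * k) * a k) u) u := by
  have := (Real.hasDerivAt_rpow_const (p := p) (Or.inl hu.ne')).mul (hasDerivAt_T h hu)
  refine this.congr_deriv ?_
  rw [T_lin h, rpow_sub_one hu.ne']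
  field_simp

/-- Comparing `T a` with `T b` one degree up: the coefficients of `u ^ 2 * T a u` are those of `a`
moved one place, so only `b 0` is left over. -/
lemma T_shift_le {a b : ℕ → ℝ} (ha : Adm a) (hb : Adm b) (hab : ∀ k, a k ≤ b (k + 1)) (u : ℝ) :
    b 0 + u ^ 2 * T a u ≤ T b u := by
  rw [T, T, (hb.summable u).tsum_eq_zero_add, ← tsum_mul_left]
  have h1 : Summable fun k => b (k + 1) * u ^ (2 * (k + 1)) :=
    (summable_nat_add_iff 1).2 (hb.summable u)
  have := ((ha.summable u).mul_left (u ^ 2)).tsum_le_tsum (fun k => ?_) h1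
  · simpa using this
  · have := mul_le_mul_of_nonneg_right (hab k) (by rw [pow_mul]; positivity : 0 ≤ u ^ (2 * (k + 1)))
    calc _ = a k * u ^ (2 * (k + 1)) := by ring
      _ ≤ _ := this

lemma le_T_shift {a b : ℕ → ℝ} (ha : Adm a) (hb : Adm b) (hab : ∀ k, b (k + 1) ≤ a k) (u : ℝ) :
    T b u ≤ b 0 + u ^ 2 * T a u := by
  rw [T, T, (hb.summable u).tsum_eq_zero_add, ← tsum_mul_left]
  have h1 : Summable fun k => b (k + 1) * u ^ (2 * (k + 1)) :=
    (summable_nat_add_iff 1).2 (hb.summable u)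
  have := h1.tsum_le_tsum (fun k => ?_) ((ha.summable u).mul_left (u ^ 2))
  · simpa using this
  · have := mul_le_mul_of_nonneg_right (hab k) (by rw [pow_mul]; positivity : 0 ≤ u ^ (2 * (k + 1)))
    calc _ ≤ a k * u ^ (2 * (k + 1)) := this
      _ = _ := by ring

/-! ### The Struve coefficients -/

/-- The coefficients in `L_ν(u) = u ^ (ν+1) * ∑ c_k u ^ (2k)`. -/
noncomputable def c (ν : ℝ) (k : ℕ) : ℝ :=
  (1 / 2 : ℝ) ^ (ν + 2 * (k : ℝ) + 1) /
    (Real.Gamma ((k : ℝ) + 3 / 2) * Real.Gamma ((k : ℝ) + ν + 3 / 2))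

variable {ν : ℝ}

lemma c_pos (hν : 1 / 2 < ν) (k : ℕ) : 0 < c ν k := by
  have h1 : 0 < Real.Gamma ((k : ℝ) + 3 / 2) := Real.Gamma_pos_of_pos (by positivity)
  have h2 : 0 < Real.Gamma ((k : ℝ) + ν + 3 / 2) := Real.Gamma_pos_of_pos (by positivity)
  unfold c
  positivity

lemma c_succ (hν : 1 / 2 < ν) (k : ℕ) :
    c ν (k + 1) * ((2 * k + 3) * (2 * k + 2 * ν + 3)) = c ν k := by
  have h1 : 0 < Real.Gamma ((k : ℝ) + 3 / 2) := Real.Gamma_pos_of_pos (by positivity)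
  have h2 : 0 < Real.Gamma ((k : ℝ) + ν + 3 / 2) := Real.Gamma_pos_of_pos (by positivity)
  have h3 : (k : ℝ) + 3 / 2 ≠ 0 := by positivity
  have h4 : (k : ℝ) + ν + 3 / 2 ≠ 0 := by positivity
  unfold c
  push_cast
  rw [show (k : ℝ) + 1 + 3 / 2 = (k + 3 / 2) + 1 by ring,
    show (k : ℝ) + 1 + ν + 3 / 2 = (k + ν + 3 / 2) + 1 by ring,
    Real.Gamma_add_one h3, Real.Gamma_add_one h4,
    show ν + 2 * ((k : ℝ) + 1) + 1 = (ν + 2 * k + 1) + (2 : ℕ) by push_cast; ring,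
    Real.rpow_add_natCast (by norm_num)]
  have h5 : (k : ℝ) * 2 + 3 ≠ 0 := by positivity
  have h6 : ((k : ℝ) + ν) * 2 + 3 ≠ 0 := by positivity
  field_simp

lemma c_zero (ν : ℝ) : c ν 0 = 1 / (√π * 2 ^ ν * Real.Gamma (ν + 3 / 2)) := by
  have h : Real.Gamma (3 / 2) = √π / 2 := by
    rw [show (3 / 2 : ℝ) = 1 / 2 + 1 by norm_num, Real.Gamma_add_one (by norm_num),
      Real.Gamma_one_half_eq]
    ring
  have h2 : (0 : ℝ) < 2 ^ ν := by positivity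
  have h3 : 0 < √π := by positivity
  simp only [c, Nat.cast_zero, mul_zero, add_zero, zero_add, h]
  rw [rpow_add_one (by norm_num), one_div, Real.inv_rpow (by norm_num)]
  rcases eq_or_ne (Real.Gamma (ν + 3 / 2)) 0 with h0 | h0
  · simp [h0]
  · field_simp

lemma adm_c (hν : 1 / 2 < ν) : Adm (c ν) := by
  intro R
  -- the recursion divides by at least `k + 1` at each step
  have hb : ∀ k : ℕ, c ν k ≤ c ν 0 / k.factorial := by
    intro k
    induction k with
    | zero => simp
    | succ k ih =>
      rw [← c_succ hν k] at ih
      have hk : (0 : ℝ) ≤ k := k.cast_nonneg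
      have hp := c_pos hν (k + 1)
      rw [le_div_iff₀ (by positivity)] at ih ⊢
      rw [Nat.factorial_succ]
      push_cast
      refine le_trans ?_ ih
      rw [mul_assoc, ← mul_assoc]
      have hf : (0 : ℝ) < k.factorial := by positivity
      have : (k : ℝ) + 1 ≤ (2 * k + 3) * (2 * k + 2 * ν + 3) := by nlinarith
      calc c ν (k + 1) * (k + 1) * k.factorial
          ≤ c ν (k + 1) * ((2 * k + 3) * (2 * k + 2 * ν + 3)) * k.factorial := by gcongr
        _ = _ := by ring
  refine Summable.of_norm_bounded ((Real.summable_pow_div_factorial |R|).mul_left (c ν 0)) fun k => ?_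
  rw [Real.norm_eq_abs, abs_mul, abs_of_pos (c_pos hν k), abs_pow]
  calc c ν k * |R| ^ k ≤ c ν 0 / k.factorial * |R| ^ k := by gcongr; exact hb k
    _ = _ := by ring

lemma struve_eq (hν : 1 / 2 < ν) {u : ℝ} (hu : 0 ≤ u) :
    u ^ ν * struveL ν u = u ^ (2 * ν + 1) * T (c ν) u := by
  rcases hu.eq_or_lt with rfl | hu
  · rw [Real.zero_rpow (by linarith), Real.zero_rpow (by linarith), zero_mul, zero_mul]
  · rw [struveL, T, ← tsum_mul_left, ← tsum_mul_left]
    refine tsum_congr fun k => ?_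
    rw [show u / 2 = u * (1 / 2) by ring, Real.mul_rpow hu.le (by norm_num), c,
      show 2 * ν + 1 = ν + (ν + 1) by ring, Real.rpow_add hu ν (ν + 1),
      show ν + 2 * (k : ℝ) + 1 = (ν + 1) + ((2 * k : ℕ) : ℝ) by push_cast; ring,
      Real.rpow_add_natCast hu.ne']
    ring

lemma T_c_pos (hν : 1 / 2 < ν) (u : ℝ) : 0 < T (c ν) u := by
  have h := (adm_c hν).summable u
  refine h.tsum_pos (fun k => ?_) 0 ?_
  · have := c_pos hν k
    rw [pow_mul]
    positivity
  · simpa using c_pos hν 0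

/-! ### Ratio inequalities for the Struve function -/

/-- The inequality `L_{ν-1}(u) ≥ (1 + (ν - 1/2) / u) L_ν(u)` in terms of the even power series. -/
lemma struve_ratio_lower (hν : 1 / 2 < ν) {x : ℝ} (hx : 0 < x) :
    x * T (c ν) x ≤ (ν + 3 / 2) * T (c ν) x + T (fun k => 2 * k * c ν k) x := by
  have hc := adm_c hν
  set p : ℝ := ν + 3 / 2 with hp
  set b : ℕ → ℝ := fun k => (p + 2 * k) * c ν k with hb
  have hbA : Adm b := hc.lin p
  set d : ℕ → ℝ := fun k => (p - 1 + 2 * k) * b k with hd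
  have hdA : Adm d := hbA.lin (p - 1)
  have hder : ∀ u : ℝ, 0 < u → HasDerivAt
      (fun u => Real.exp u * (u ^ (p - 1) * T b u - u ^ p * T (c ν) u))
      (Real.exp u * (u ^ (p - 1) * T b u - u ^ p * T (c ν) u) +
        Real.exp u * (u ^ (p - 1 - 1) * T d u - u ^ (p - 1) * T b u)) u := fun u hu =>
    (Real.hasDerivAt_exp u).mul ((hasDerivAt_rpow_T hbA (p - 1) hu).sub (hasDerivAt_rpow_T hc p hu))
  have hmono : MonotoneOn (fun u => Real.exp u * (u ^ (p - 1) * T b u - u ^ p * T (c ν) u))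
      (Set.Ici 0) := by
    refine monotoneOn_of_deriv_nonneg (convex_Ici 0) ?_ ?_ ?_
    · have h1 := Real.continuous_rpow_const (show 0 ≤ p - 1 by linarith)
      have h2 := Real.continuous_rpow_const (show 0 ≤ p by linarith)
      exact (Real.continuous_exp.mul ((h1.mul (continuous_T hbA)).sub
        (h2.mul (continuous_T hc)))).continuousOn
    · rw [interior_Ici]
      exact fun u hu => (hder u hu).differentiableAt.differentiableWithinAt
    · rw [interior_Ici]
      intro u hu
      have hu : 0 < u := hu
      rw [(hder u hu).deriv]
      -- with `f = u ^ p * T c`, the coefficients of `f''` dominate those of `f`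
      have hs : d 0 + u ^ 2 * T (c ν) u ≤ T d u := by
        refine T_shift_le hc hdA (fun k => ?_) u
        have h0 := c_pos hν (k + 1)
        have hk : (0 : ℝ) ≤ k := k.cast_nonneg
        rw [← c_succ hν k]
        simp only [hd, hb]
        push_cast
        have : (2 * (k : ℝ) + 3) * (2 * k + 2 * ν + 3) ≤
            (p - 1 + 2 * (k + 1)) * (p + 2 * (k + 1)) := by
          rw [hp]
          nlinarith
        nlinarith
      have hd0 : 0 ≤ d 0 := by
        have := c_pos hν 0
        simp only [hd, hb]
        push_cast
        have h3 : 0 ≤ p - 1 := by linarith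
        have h4 : 0 ≤ p := by linarith
        simp only [mul_zero, add_zero]
        positivity
      have e : u ^ p = u ^ (p - 1 - 1) * u ^ 2 := by
        rw [← Real.rpow_add_natCast hu.ne']
        congr 1
        push_cast
        ring
      rw [e]
      have h5 : 0 < Real.exp u := Real.exp_pos u
      have h6 : 0 < u ^ (p - 1 - 1) := Real.rpow_pos_of_pos hu _
      have h7 : 0 ≤ Real.exp u * u ^ (p - 1 - 1) * (T d u - u ^ 2 * T (c ν) u) :=
        mul_nonneg (by positivity) (by linarith)
      nlinarith
  have h0 := hmono (Set.self_mem_Ici) (Set.mem_Ici.2 hx.le) hx.le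
  simp only [Real.zero_rpow (show p - 1 ≠ 0 by rw [hp]; linarith),
    Real.zero_rpow (show p ≠ 0 by rw [hp]; linarith)] at h0
  have h1 : 0 ≤ Real.exp x * x ^ (p - 1) * (T b x - x * T (c ν) x) := by
    have e : x ^ p = x ^ (p - 1) * x := by rw [← Real.rpow_add_one hx.ne']; congr 1; ring
    rw [e] at h0
    linarith
  have h2 := nonneg_of_mul_nonneg_right h1
    (mul_pos (Real.exp_pos x) (Real.rpow_pos_of_pos hx _))
  have h3 : T b x = p * T (c ν) x + T (fun k => 2 * k * c ν k) x := T_lin hc p x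
  linarith

/-- The inequality `L_{ν+1}(u) < L_ν(u)` in terms of the even power series. -/
lemma struve_ratio_upper (hν : 1 / 2 < ν) {x : ℝ} (hx : 0 < x) :
    T (c ν) x + T (fun k => 2 * k * c ν k) x < x * T (c ν) x + c ν 0 := by
  have hc := adm_c hν
  set b : ℕ → ℝ := fun k => (1 + 2 * k) * c ν k with hb
  have hbA : Adm b := hc.lin 1
  set d : ℕ → ℝ := fun k => (0 + 2 * k) * b k with hd
  have hdA : Adm d := hbA.lin 0
  have hder : ∀ u : ℝ, 0 < u → HasDerivAt
      (fun u => Real.exp u * (u ^ (1 : ℝ) * T (c ν) u + c ν 0 - u ^ (0 : ℝ) * T b u))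
      (Real.exp u * (u ^ (1 : ℝ) * T (c ν) u + c ν 0 - u ^ (0 : ℝ) * T b u) +
        Real.exp u * (u ^ ((1 : ℝ) - 1) * T b u - u ^ ((0 : ℝ) - 1) * T d u)) u := fun u hu =>
    (Real.hasDerivAt_exp u).mul (((hasDerivAt_rpow_T hc 1 hu).add_const (c ν 0)).sub
      (hasDerivAt_rpow_T hbA 0 hu))
  have hmono : StrictMonoOn
      (fun u => Real.exp u * (u ^ (1 : ℝ) * T (c ν) u + c ν 0 - u ^ (0 : ℝ) * T b u))
      (Set.Ici 0) := by
    refine strictMonoOn_of_deriv_pos (convex_Ici 0) ?_ ?_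
    · have h1 := continuous_T hbA
      have h2 := continuous_T hc
      simp only [Real.rpow_one, Real.rpow_zero]
      fun_prop
    · rw [interior_Ici]
      intro u hu
      have hu : 0 < u := hu
      rw [(hder u hu).deriv]
      -- with `m = u * T c`, the coefficients of `m''` are dominated by those of `m`
      have hs : T d u ≤ d 0 + u ^ 2 * T (c ν) u := by
        refine le_T_shift hc hdA (fun k => ?_) u
        have h0 := c_pos hν (k + 1)
        have hk : (0 : ℝ) ≤ k := k.cast_nonneg
        rw [← c_succ hν k]
        simp only [hd, hb]
        push_cast
        have : (0 + 2 * ((k : ℝ) + 1)) * (1 + 2 * (k + 1)) ≤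
            (2 * (k : ℝ) + 3) * (2 * k + 2 * ν + 3) := by
          nlinarith
        nlinarith
      have hd0 : d 0 = 0 := by simp [hd]
      have h8 : T d u / u ≤ u * T (c ν) u := by
        rw [div_le_iff₀ hu]
        linarith
      rw [sub_self, zero_sub, Real.rpow_one, Real.rpow_zero, Real.rpow_neg_one]
      have h5 : 0 < Real.exp u := Real.exp_pos u
      have h9 : 0 < u * T (c ν) u + c ν 0 - T d u / u := by linarith [c_pos hν 0]
      have h7 := mul_pos h5 h9
      calc 0 < _ := h7
        _ = _ := by ring
  have h0 := hmono (Set.self_mem_Ici) (Set.mem_Ici.2 hx.le) hx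
  have hT0 : T b 0 = c ν 0 := by
    rw [T, tsum_eq_single 0 (fun k hk => by simp [hk])]
    simp [hb]
  simp only [Real.rpow_one, Real.rpow_zero, hT0, zero_mul, zero_add, one_mul, sub_self, mul_zero]
    at h0
  have h2 := pos_of_mul_pos_right h0 (Real.exp_pos x).le
  have h3 : T b x = 1 * T (c ν) x + T (fun k => 2 * k * c ν k) x := T_lin hc 1 x
  linarith

/-! ### The comparison function -/

/-- Positivity of the derivative of the comparison function, up to the factor
`e^{-βx} x^{2ν}`; `P` and `Q` stand for the values of the two power series. -/
lemma kernel_pos {β x P Q c0 : ℝ} (hν : 1 / 2 < ν) (hβ2 : β < 1) (hx : 0 < x)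
    (hP : 0 < P) (hL : x * P ≤ (ν + 3 / 2) * P + Q) (hU : P + Q < x * P + c0) {C : ℝ}
    (hC1 : 1 ≤ C) (hC2 : 2 ≤ C * (ν - 1 / 2)) :
    0 < x * P + c0 - (Q + (2 * ν + 1) * P) +
      2 * ν * C * ((Q + (2 * ν + 1) * P - β * (x * P)) / (1 + (1 - β) * x) -
        (1 - β) * x * P / (1 + (1 - β) * x) ^ 2) := by
  set y : ℝ := (1 - β) * x with hy
  have hy0 : 0 < y := mul_pos (by linarith) hx
  have h1 : P ≤ C * ((Q + (2 * ν + 1) * P - β * (x * P)) / (1 + y) - y * P / (1 + y) ^ 2) := by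
    have h2 : (ν - 1 / 2 + y) * P ≤ Q + (2 * ν + 1) * P - β * (x * P) := by
      rw [hy]; linarith
    have h3 : P ≤ C * ((ν - 1 / 2 + y) * P / (1 + y) - y * P / (1 + y) ^ 2) := by
      have e : C * ((ν - 1 / 2 + y) * P / (1 + y) - y * P / (1 + y) ^ 2) =
          P * (C * ((ν - 1 / 2 + y) * (1 + y) - y)) / (1 + y) ^ 2 := by
        field_simp
      rw [e, le_div_iff₀ (by positivity)]
      -- the claim is `(1 + y)² ≤ C ((a + y)(1 + y) - y) = C (a + a y + y²)` with `a = ν - 1/2`,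
      -- which follows from `C a ≥ 2` and `C ≥ 1` coefficient by coefficient
      refine mul_le_mul_of_nonneg_left ?_ hP.le
      nlinarith [mul_le_mul_of_nonneg_right hC2 hy0.le,
        mul_le_mul_of_nonneg_right hC1 (sq_nonneg y)]
    refine h3.trans ?_
    gcongr
  nlinarith

lemma integral_lowerGamma {β : ℝ} (hβ : 0 < β) {x : ℝ} (hx : 0 < x) :
    lowerGamma (2 * ν + 1) (β * x) =
      β ^ (2 * ν + 1) * ∫ u in (0 : ℝ)..x, Real.exp (-β * u) * u ^ (2 * ν) := by
  have h := intervalIntegral.smul_integral_comp_mul_left (a := 0) (b := x)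
    (fun u : ℝ => Real.exp (-u) * u ^ (2 * ν)) β
  rw [mul_zero, smul_eq_mul] at h
  rw [lowerGamma, show 2 * ν + 1 - 1 = 2 * ν by ring, ← h, Real.rpow_add_one hβ.ne',
    mul_comm _ β, mul_assoc, ← intervalIntegral.integral_const_mul (β ^ (2 * ν))]
  congr 1
  refine intervalIntegral.integral_congr fun u hu => ?_
  rw [Set.uIcc_of_le hx.le] at hu
  simp only [Real.mul_rpow hβ.le hu.1, neg_mul]
  ring

end StruveAux

open StruveAux in
theorem stmt13 (ν β : ℝ) (hν : ν > 1/2) (hβ1 : 0 < β) (hβ2 : β < 1) :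
    ∀ x : ℝ, 0 < x →
      ∫ u in (0:ℝ)..x, Real.exp (-β * u) * u ^ ν * struveL ν u >
        1 / (1 - β) *
          ((1 - 2 * ν * (2 * ν + 1 + 2 * Real.sqrt 2) / ((2 * ν - 1) * (1 - β) * x)) *
              (Real.exp (-β * x) * x ^ ν * struveL ν x) -
            lowerGamma (2 * ν + 1) (β * x) /
              (Real.sqrt π * 2 ^ ν * β ^ (2 * ν + 1) * Real.Gamma (ν + 3/2))) := by
  intro x hx
  have hν' : 1 / 2 < ν := hν
  have hc := adm_c hν'
  have hα : 0 < 1 - β := by linarith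
  have ha : 0 < 2 * ν - 1 := by linarith
  set C : ℝ := (2 * ν + 1 + 2 * √2) / (2 * ν - 1) with hC
  have hs2 : 1 ≤ √2 := Real.one_le_sqrt.2 (by norm_num)
  have hC1 : 1 ≤ C := by
    rw [hC, le_div_iff₀ ha]
    linarith
  have hC2 : 2 ≤ C * (ν - 1 / 2) := by
    have : C * (ν - 1 / 2) = (2 * ν + 1 + 2 * √2) / 2 := by
      rw [hC]
      field_simp
    linarith
  set P := T (c ν) with hP
  set Q := T (fun k => 2 * k * c ν k) with hQ
  set g : ℝ → ℝ := fun u => u ^ (2 * ν + 1) * P u with hg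
  have hgc : Continuous g :=
    (Real.continuous_rpow_const (by linarith)).mul (continuous_T hc)
  have hI1 : Continuous fun u => Real.exp (-β * u) * g u := by fun_prop
  have hI2 : Continuous fun u : ℝ => Real.exp (-β * u) * u ^ (2 * ν) := by
    have := Real.continuous_rpow_const (show 0 ≤ 2 * ν by linarith)
    fun_prop
  -- the weight `1 / (1 + αx)`, rather than `1 / (αx)`, makes the boundary term vanish at `0`
  -- and its derivative controllable for every `α = 1 - β`
  set N : ℝ → ℝ := fun x => (1 - β) * (∫ u in (0 : ℝ)..x, Real.exp (-β * u) * g u) +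
    c ν 0 * (∫ u in (0 : ℝ)..x, Real.exp (-β * u) * u ^ (2 * ν)) +
    Real.exp (-β * x) * g x * (2 * ν * C / (1 + (1 - β) * x) - 1) with hN
  have hder : ∀ u : ℝ, 0 < u → HasDerivAt N
      ((1 - β) * (Real.exp (-β * u) * g u) + c ν 0 * (Real.exp (-β * u) * u ^ (2 * ν)) +
        ((Real.exp (-β * u) * (-β) * g u +
          Real.exp (-β * u) * (u ^ (2 * ν) * ((2 * ν + 1) * P u + Q u))) *
          (2 * ν * C / (1 + (1 - β) * u) - 1) +
        Real.exp (-β * u) * g u * (-(2 * ν * C * (1 - β)) / (1 + (1 - β) * u) ^ 2))) u := by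
    intro u hu
    have hne : 1 + (1 - β) * u ≠ 0 := by positivity
    have h1 := (hI1.integral_hasStrictDerivAt 0 u).hasDerivAt.const_mul (1 - β)
    have h2 := (hI2.integral_hasStrictDerivAt 0 u).hasDerivAt.const_mul (c ν 0)
    have h3 : HasDerivAt g (u ^ (2 * ν) * ((2 * ν + 1) * P u + Q u)) u := by
      have := hasDerivAt_rpow_T hc (2 * ν + 1) hu
      rwa [T_lin hc, show 2 * ν + 1 - 1 = 2 * ν by ring] at this
    have h4 : HasDerivAt (fun u => Real.exp (-β * u)) (Real.exp (-β * u) * (-β)) u := by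
      simpa using ((hasDerivAt_id u).const_mul (-β)).exp
    have h5 : HasDerivAt (fun u => 2 * ν * C / (1 + (1 - β) * u) - 1)
        (-(2 * ν * C * (1 - β)) / (1 + (1 - β) * u) ^ 2) u := by
      have h6 : HasDerivAt (fun u => 1 + (1 - β) * u) (1 - β) u := by
        simpa using ((hasDerivAt_id u).const_mul (1 - β)).const_add 1
      have := ((hasDerivAt_const u (2 * ν * C)).div h6 hne).sub_const 1
      simpa using this
    exact (h1.add h2).add ((h4.mul h3).mul h5)
  have hmono : StrictMonoOn N (Set.Ici 0) := by
    refine strictMonoOn_of_deriv_pos (convex_Ici 0) ?_ ?_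
    · intro u hu
      rcases (Set.mem_Ici.1 hu).eq_or_lt with rfl | hu
      · have h1 := (hI1.integral_hasStrictDerivAt 0 0).hasDerivAt.continuousAt
        have h2 := (hI2.integral_hasStrictDerivAt 0 0).hasDerivAt.continuousAt
        have h3 : ContinuousAt (fun x => 2 * ν * C / (1 + (1 - β) * x) - 1) 0 :=
          ((continuousAt_const).div (by fun_prop) (by simp)).sub continuousAt_const
        exact (((continuousAt_const.mul h1).add (continuousAt_const.mul h2)).add
          (hI1.continuousAt.mul h3)).continuousWithinAt
      · exact (hder u hu).continuousAt.continuousWithinAt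
    · rw [interior_Ici]
      intro u hu
      have hu : 0 < u := hu
      rw [(hder u hu).deriv]
      have hk := kernel_pos hν' hβ2 hu (T_c_pos hν' u) (struve_ratio_lower hν' hu)
        (struve_ratio_upper hν' hu) hC1 hC2
      have hne : 1 + (1 - β) * u ≠ 0 := by positivity
      have hpos : 0 < Real.exp (-β * u) * u ^ (2 * ν) :=
        mul_pos (Real.exp_pos _) (Real.rpow_pos_of_pos hu _)
      have := mul_pos hpos hk
      simp only [hg]
      rw [Real.rpow_add_one hu.ne']
      refine this.trans_eq ?_
      simp only [← hP, ← hQ]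
      field_simp
      ring
  have hN0 : N 0 = 0 := by
    simp [hN, hg, Real.zero_rpow (show 2 * ν + 1 ≠ 0 by linarith)]
  have hNx : 0 < N x := by
    rw [← hN0]
    exact hmono Set.self_mem_Ici (Set.mem_Ici.2 hx.le) hx
  have hint : ∫ u in (0 : ℝ)..x, Real.exp (-β * u) * u ^ ν * struveL ν u =
      ∫ u in (0 : ℝ)..x, Real.exp (-β * u) * g u := by
    refine intervalIntegral.integral_congr fun u hu => ?_
    rw [Set.uIcc_of_le hx.le] at hu
    simp only [mul_assoc, struve_eq hν' hu.1, hg, hP]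
  have hgx : Real.exp (-β * x) * x ^ ν * struveL ν x = Real.exp (-β * x) * g x := by
    rw [mul_assoc, struve_eq hν' hx.le]
  have hgam : lowerGamma (2 * ν + 1) (β * x) /
      (√π * 2 ^ ν * β ^ (2 * ν + 1) * Real.Gamma (ν + 3 / 2)) =
      c ν 0 * ∫ u in (0 : ℝ)..x, Real.exp (-β * u) * u ^ (2 * ν) := by
    rw [integral_lowerGamma hβ1 hx, c_zero]
    have h1 : 0 < β ^ (2 * ν + 1) := by positivity
    have h2 : 0 < Real.Gamma (ν + 3 / 2) := Real.Gamma_pos_of_pos (by linarith)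
    field_simp
  have hgpos : 0 < Real.exp (-β * x) * g x :=
    mul_pos (Real.exp_pos _) (mul_pos (Real.rpow_pos_of_pos hx _) (T_c_pos hν' x))
  have hco : 2 * ν * (2 * ν + 1 + 2 * √2) / ((2 * ν - 1) * (1 - β) * x) =
      2 * ν * C / ((1 - β) * x) := by
    rw [hC]
    field_simp
  have hle : 2 * ν * C / (1 + (1 - β) * x) ≤ 2 * ν * C / ((1 - β) * x) := by
    gcongr
    linarith
  rw [hint, hgx, hgam, hco, gt_iff_lt, one_div, inv_mul_lt_iff₀ hα]
  simp only [hN] at hNx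
  nlinarith [mul_le_mul_of_nonneg_left hle hgpos.le]
end
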